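/- Let w = Σ_{l=0}^{3} w^l be a graded form on ℝ³ whose components lie in H¹_loc, and assume that ∫[⟨δw,δφ⟩ + ⟨dw,dφ⟩ − ω²ε₀μ₀⟨w,φ⟩]dx + ⟨Q(γ,μ,ω)w,φ⟩ = 0 for every graded form φ = Σ_{l=0}^{3} φ^l with smooth compactly supported components, where dw and δw are taken degreewise using the weak derivatives of w. Then the graded form v := P(γ,μ,ω)^t w, defined almost everywhere from the weak derivatives of w, is a weak solution of P(γ,μ,ω)v = 0 on ℝ³, and moreover every component of every v^l belongs to H¹_loc. -/

import Mathlib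

noncomputable section

open MeasureTheory Finset

namespace EMPaper

abbrev Pt (n : ℕ) := Fin n → ℝ
abbrev GF (n : ℕ) := Finset (Fin n) → ℂ
abbrev Form (n : ℕ) := Pt n → GF n

variable {n : ℕ}

def msgn (I J : Finset (Fin n)) : ℂ :=
  (-1 : ℂ) ^ (((I ×ˢ J).filter fun p => p.2 < p.1).card)

def wedge (u v : GF n) : GF n := fun S =>
  ∑ I ∈ S.powerset, msgn I (S \ I) * u I * v (S \ I)

def vee (v u : GF n) : GF n := fun I =>
  ∑ J ∈ (univ \ I).powerset, msgn I J * v J * u (I ∪ J)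

def ginner (u v : GF n) : ℂ := ∑ S : Finset (Fin n), u S * v S

def gconj (u : GF n) : GF n := fun S => (starRingEnd ℂ) (u S)

def proj (l : ℕ) (u : GF n) : GF n := fun S => if S.card = l then u S else 0

def IsGrade (l : ℕ) (u : GF n) : Prop := ∀ S : Finset (Fin n), S.card ≠ l → u S = 0

def dxe (j : Fin n) : GF n := fun S => if S = {j} then 1 else 0

def oneG (c : Fin n → ℂ) : GF n := fun S => ∑ j, if S = {j} then c j else 0

def altSign (u : GF n) : GF n := fun S => (-1 : ℂ) ^ S.card * u S

def gd (D : Fin n → GF n) : GF n := fun S => ∑ j, wedge (dxe j) (D j) S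

def gdel (D : Fin n → GF n) : GF n := fun S =>
  (-1 : ℂ) ^ (S.card + 1) * ∑ j, vee (dxe j) (D j) S

def pd (j : Fin n) (f : Pt n → ℂ) : Pt n → ℂ := fun x => fderiv ℝ f x (Pi.single j 1)

def Dcl (φ : Form n) : Fin n → Form n := fun j x S => pd j (fun y => φ y S) x

def IsTest (φ : Pt n → ℂ) : Prop := ContDiff ℝ (⊤ : ℕ∞) φ ∧ HasCompactSupport φ

def TestForm (φ : Form n) : Prop := ∀ S : Finset (Fin n), IsTest fun x => φ x S

def L2loc (f : Pt n → ℂ) : Prop :=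
  AEStronglyMeasurable f (volume : Measure (Pt n)) ∧
    ∀ K : Set (Pt n), IsCompact K → IntegrableOn (fun x => ‖f x‖ ^ 2) K volume

def HasWeakPD (j : Fin n) (f g : Pt n → ℂ) : Prop :=
  ∀ φ : Pt n → ℂ, IsTest φ → ∫ x, g x * φ x = -∫ x, f x * pd j φ x

def H1locWith (w : Form n) (Dw : Fin n → Form n) : Prop :=
  (∀ S : Finset (Fin n), L2loc fun x => w x S) ∧
    (∀ (j : Fin n) (S : Finset (Fin n)),
      HasWeakPD j (fun x => w x S) fun x => Dw j x S) ∧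
    ∀ (j : Fin n) (S : Finset (Fin n)), L2loc fun x => Dw j x S

/-! The three-dimensional electromagnetic setting. -/

/-- The data of the medium: frequency `ω`, constants `ε₀, μ₀` and `C¹` coefficients
`ε, σ, μ` with `ε ≥ ε₀ > 0`, `μ ≥ μ₀ > 0`, `σ ≥ 0`. -/
structure Coeffs where
  ω : ℝ
  ε₀ : ℝ
  μ₀ : ℝ
  εf : Pt 3 → ℝ
  σf : Pt 3 → ℝ
  μf : Pt 3 → ℝ
  hω : 0 < ω
  hε₀ : 0 < ε₀
  hμ₀ : 0 < μ₀
  hεC1 : ContDiff ℝ 1 εf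
  hσC1 : ContDiff ℝ 1 σf
  hμC1 : ContDiff ℝ 1 μf
  hεge : ∀ x, ε₀ ≤ εf x
  hμge : ∀ x, μ₀ ≤ μf x
  hσge : ∀ x, 0 ≤ σf x

namespace Coeffs

variable (C : Coeffs)

/-- `γ = ε + iσ/ω`. -/
def γ : Pt 3 → ℂ := fun x => (C.εf x : ℂ) + Complex.I * (C.σf x : ℂ) / (C.ω : ℂ)

/-- `a = (1/2) Log γ`. -/
def a : Pt 3 → ℂ := fun x => (1 / 2 : ℂ) * Complex.log (C.γ x)

/-- `b = (1/2) Log μ`. -/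
def b : Pt 3 → ℂ := fun x => (1 / 2 : ℂ) * Complex.log ((C.μf x : ℂ))

/-- `γ^{1/2} = e^a`. -/
def sg : Pt 3 → ℂ := fun x => Complex.exp (C.a x)

/-- `μ^{1/2} = e^b`. -/
def sm : Pt 3 → ℂ := fun x => Complex.exp (C.b x)

/-- The one-form `da`. -/
def da : Form 3 := fun x => oneG fun j => pd j C.a x

/-- The one-form `db`. -/
def db : Form 3 := fun x => oneG fun j => pd j C.b x

/-- The one-form `d(γ^{1/2} μ^{1/2})`. -/
def dsgm : Form 3 := fun x => oneG fun j => pd j (fun y => C.sg y * C.sm y) x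

/-- The zeroth order coefficient `iω γ^{1/2} μ^{1/2}`. -/
def c0 : Pt 3 → ℂ := fun x => Complex.I * (C.ω : ℂ) * C.sg x * C.sm x

end Coeffs

/-- The zeroth order part of `P(γ,μ,ω)` at a point, given the values `A = da`, `B = db`
and `c = iωγ^{1/2}μ^{1/2}` there:
`da∧v¹ + da∨(v¹+v³) + db∧(v⁰+v²) − db∨v² + iωγ^{1/2}μ^{1/2} v`. -/
def P0 (A B : GF 3) (c : ℂ) (v : GF 3) : GF 3 :=
  wedge A (proj 1 v) + vee A (proj 1 v + proj 3 v) + wedge B (proj 0 v + proj 2 v)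
    - vee B (proj 2 v) + c • v

/-- The zeroth order part of `P(γ,μ,ω)^t` at a point:
`db∧v¹ + db∨(v¹+v³) + da∧(v⁰+v²) − da∨v² + iωγ^{1/2}μ^{1/2} v`. -/
def P0t (A B : GF 3) (c : ℂ) (v : GF 3) : GF 3 :=
  wedge B (proj 1 v) + vee B (proj 1 v + proj 3 v) + wedge A (proj 0 v + proj 2 v)
    - vee A (proj 2 v) + c • v

/-- `P(γ,μ,ω)v` at a point, computed from the partial derivatives `D j = ∂_j v`. -/
def Pfull (A B : GF 3) (c : ℂ) (D : Fin 3 → GF 3) (v : GF 3) : GF 3 :=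
  (gd fun j => altSign (D j)) + (gdel fun j => altSign (D j)) + P0 A B c v

/-- `P(γ,μ,ω)^t v` at a point, computed from the partial derivatives `D j = ∂_j v`. -/
def Ptfull (A B : GF 3) (c : ℂ) (D : Fin 3 → GF 3) (v : GF 3) : GF 3 :=
  -((gd fun j => altSign (D j)) + (gdel fun j => altSign (D j))) + P0t A B c v

/-- `v` is a weak solution of `P(γ,μ,ω)v = 0` on `ℝ³`. -/
def IsWeakSolP (C : Coeffs) (v : Form 3) : Prop :=
  ∀ φ : Form 3, TestForm φ →
    (∫ x, ginner (altSign (v x))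
        ((gd fun j => Dcl φ j x) + gdel fun j => Dcl φ j x))
      + (∫ x, ginner (P0 (C.da x) (C.db x) (C.c0 x) (v x)) (φ x)) = 0

/-- `v` is a weak solution of `P(γ,μ,ω)^t v = 0` on `ℝ³`. -/
def IsWeakSolPt (C : Coeffs) (v : Form 3) : Prop :=
  ∀ φ : Form 3, TestForm φ →
    (∫ x, ginner (-altSign (v x))
        ((gd fun j => Dcl φ j x) + gdel fun j => Dcl φ j x))
      + (∫ x, ginner (P0t (C.da x) (C.db x) (C.c0 x) (v x)) (φ x)) = 0

/-- The components of the Hodge star of the 2-form part: `∗(dx²∧dx³) = dx¹`,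
`∗(dx³∧dx¹) = dx²`, `∗(dx¹∧dx²) = dx³`. -/
def star2 (u : GF 3) : Fin 3 → ℂ := fun k =>
  if k = 0 then u {1, 2} else if k = 1 then -u {0, 2} else u {0, 1}

/-- `⟨c, D*(u⊙v)⟩` for 1-forms with components `u, v` and partial derivatives
`du j k = ∂_j u_k`, `dv j k = ∂_j v_k`, where
`D*(u⊙v) = −Σ_k (Σ_j ∂_j(u_j v_k + u_k v_j)) dx^k`. -/
def dstarPair (c u v : Fin 3 → ℂ) (du dv : Fin 3 → Fin 3 → ℂ) : ℂ :=
  ∑ k, c k * (-(∑ j, (du j j * v k + u j * dv j k + du j k * v j + u k * dv j j)))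

/-- The pairing `⟨Q(γ,μ,ω)w, φ⟩`, where `Dw` is the family of weak partial derivatives
of `w` and `φ` is a smooth compactly supported graded form.  The weak derivatives of the
scalar products and of the symmetric tensor products appearing in `Q` are expanded by
the Leibniz rule. -/
def Qpair (C : Coeffs) (w : Form 3) (Dw : Fin 3 → Form 3) (φ : Form 3) : ℂ :=
  -(∫ x, (C.ω : ℂ) ^ 2 * (C.γ x * (C.μf x : ℂ) - ((C.ε₀ * C.μ₀ : ℝ) : ℂ))
      * ginner (w x) (φ x))
  + (∫ x, ginner ((2 * Complex.I * (C.ω : ℂ)) •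
      (vee (C.dsgm x) (proj 1 (w x) + proj 3 (w x))
        + wedge (C.dsgm x) (proj 0 (w x) + proj 2 (w x)))) (φ x))
  + (∫ x, ginner (C.da x) (C.da x)
        * ginner (proj 0 (w x) + proj 2 (w x)) (proj 0 (φ x) + proj 2 (φ x))
      + ginner (C.db x) (C.db x)
        * ginner (proj 1 (w x) + proj 3 (w x)) (proj 1 (φ x) + proj 3 (φ x)))
  + (∫ x,
      (∑ j, pd j C.a x *
        (ginner (proj 2 (Dw j x) - proj 0 (Dw j x)) (proj 0 (φ x) + proj 2 (φ x))
          + ginner (proj 2 (w x) - proj 0 (w x)) (proj 0 (Dcl φ j x) + proj 2 (Dcl φ j x))))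
      + ∑ j, pd j C.b x *
        (ginner (proj 1 (Dw j x) - proj 3 (Dw j x)) (proj 1 (φ x) + proj 3 (φ x))
          + ginner (proj 1 (w x) - proj 3 (w x)) (proj 1 (Dcl φ j x) + proj 3 (Dcl φ j x))))
  + (∫ x, dstarPair (fun k => pd k C.b x) (fun j => w x {j}) (fun j => φ x {j})
      (fun j k => Dw j x {k}) (fun j k => Dcl φ j x {k}))
  + (∫ x, dstarPair (fun k => pd k C.a x) (star2 (w x)) (star2 (φ x))
      (fun j k => star2 (Dw j x) k) (fun j k => star2 (Dcl φ j x) k))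

/-- The pairing `⟨Q̃(γ,μ,ω)w, φ⟩`. -/
def Qtpair (C : Coeffs) (w : Form 3) (Dw : Fin 3 → Form 3) (φ : Form 3) : ℂ :=
  -(∫ x, (C.ω : ℂ) ^ 2 * (C.γ x * (C.μf x : ℂ) - ((C.ε₀ * C.μ₀ : ℝ) : ℂ))
      * ginner (w x) (φ x))
  + (∫ x, ginner ((-(2 * Complex.I * (C.ω : ℂ))) • vee (C.dsgm x) (proj 2 (w x))
      + (2 * Complex.I * (C.ω : ℂ)) • wedge (C.dsgm x) (proj 1 (w x))) (φ x))
  + (∫ x, ginner (C.db x) (C.db x)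
        * ginner (proj 0 (w x) + proj 2 (w x)) (proj 0 (φ x) + proj 2 (φ x))
      + ginner (C.da x) (C.da x)
        * ginner (proj 1 (w x) + proj 3 (w x)) (proj 1 (φ x) + proj 3 (φ x)))
  + (∫ x,
      (∑ j, pd j C.b x *
        (ginner (proj 0 (Dw j x) - proj 2 (Dw j x)) (proj 0 (φ x) + proj 2 (φ x))
          + ginner (proj 0 (w x) - proj 2 (w x)) (proj 0 (Dcl φ j x) + proj 2 (Dcl φ j x))))
      + ∑ j, pd j C.a x *
        (ginner (proj 3 (Dw j x) - proj 1 (Dw j x)) (proj 1 (φ x) + proj 3 (φ x))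
          + ginner (proj 3 (w x) - proj 1 (w x)) (proj 1 (Dcl φ j x) + proj 3 (Dcl φ j x))))
  - (∫ x, dstarPair (fun k => pd k C.a x) (fun j => w x {j}) (fun j => φ x {j})
      (fun j k => Dw j x {k}) (fun j k => Dcl φ j x {k}))
  - (∫ x, dstarPair (fun k => pd k C.b x) (star2 (w x)) (star2 (φ x))
      (fun j k => star2 (Dw j x) k) (fun j k => star2 (Dcl φ j x) k))

/-- The pairing `⟨q̃(γ,μ,ω)(v⁰+v³), φ⟩` for `φ = φ⁰ + φ³`, where `Dv` is the family of
weak partial derivatives of `v`. -/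
def qtPair (C : Coeffs) (v : Form 3) (Dv : Fin 3 → Form 3) (φ : Form 3) : ℂ :=
  -(∫ x, (C.ω : ℂ) ^ 2 * (C.γ x * (C.μf x : ℂ) - ((C.ε₀ * C.μ₀ : ℝ) : ℂ))
      * ginner (proj 0 (v x) + proj 3 (v x)) (φ x))
  + ∫ x, ginner (C.db x) (C.db x) * (v x ∅ * φ x ∅)
      + ginner (C.da x) (C.da x) * (v x univ * φ x univ)
      + (∑ j, pd j C.b x * (Dv j x ∅ * φ x ∅ + v x ∅ * Dcl φ j x ∅))
      + ∑ j, pd j C.a x * (Dv j x univ * φ x univ + v x univ * Dcl φ j x univ)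

/-!
The principal part `d + δ` of `P` is a Dirac operator. The gradients in `P` act by Clifford
multiplication, `da` on the odd part of a form and `db` on the even part; in `Pᵗ` they change
places. In the weak form of `P Pᵗ w` the terms with first derivatives of both `w` and `φ`, and
those with a gradient of `a` or `b`, thus carry products of two Clifford symbols. The parts of
these symbols antisymmetric in the two indices integrate to zero, because weak derivatives
commute; the rest is the Hodge Laplacian plus `Q`. Hence the second order equation says that
`v = Pᵗ w` is a weak solution of `P v = 0`. Applying `d + δ` to this equation turns it into
`Δv = ∑ⱼ ∂ⱼFⱼ` with `Fⱼ ∈ L²_loc`, so `v ∈ H¹_loc` by Fourier analysis of the cut-off equation.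
-/

section TemperedSobolev

open TemperedDistribution LineDeriv Laplacian SchwartzMap

variable {E F ι : Type*} [NormedAddCommGroup E] [InnerProductSpace ℝ E] [FiniteDimensional ℝ E]
  [MeasurableSpace E] [BorelSpace E] [NormedAddCommGroup F] [InnerProductSpace ℂ F]

theorem besselPotential_two (T : 𝓢'(E, F)) :
    besselPotential E F 2 T = T - ((2 * Real.pi : ℂ) ^ 2)⁻¹ • Δ T := by
  have symbol_eq : (fun x : E => (((1 + ‖x‖ ^ 2) ^ ((2 : ℝ) / 2) : ℝ) : ℂ)) =
      fun x => ∑ i : Fin 2, ![fun _ => 1, fun x : E => ((‖x‖ ^ 2 : ℝ) : ℂ)] i x := by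
    ext x; simp
  have hπ : (2 * Real.pi : ℂ) ≠ 0 := by simp [Real.pi_ne_zero]
  have laplacian_eq : Δ T =
      (-(2 * Real.pi : ℂ) ^ 2) •
        TemperedDistribution.fourierMultiplierCLM F (fun x : E => ((‖x‖ ^ 2 : ℝ) : ℂ)) T := by
    rw [TemperedDistribution.laplacian_eq_fourierMultiplierCLM]
    ext u
    simp [← Complex.coe_smul]
  rw [laplacian_eq, besselPotential, symbol_eq,
    TemperedDistribution.fourierMultiplierCLM_sum F
      (fun i _ => by fin_cases i <;> dsimp <;> fun_prop), smul_smul]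
  simp [hπ]

variable [CompleteSpace F]

theorem memSobolev_sum {s : ℝ} {p : ENNReal} [Fact (1 ≤ p)] (t : Finset ι) {T : ι → 𝓢'(E, F)}
    (hT : ∀ i ∈ t, MemSobolev s p (T i)) : MemSobolev s p (∑ i ∈ t, T i) :=
  Finset.sum_induction T (MemSobolev s p) (fun _ _ => MemSobolev.add)
    (memSobolev_fun_zero E F s p) hT

theorem memSobolev_add_two_of_laplacian {s : ℝ} {T : 𝓢'(E, F)} (hT : MemSobolev s 2 T)
    (hΔ : MemSobolev s 2 (Δ T)) : MemSobolev (2 + s) 2 T := by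
  rw [← memSobolev_besselPotential_iff, besselPotential_two]
  exact hT.sub (hΔ.smul _)

theorem exists_lineDeriv_eq_of_laplacian_eq [Fintype ι] (e : ι → E)
    (U k : Lp F 2 (volume : Measure E)) (H : ι → Lp F 2 (volume : Measure E))
    (h : Δ (U : 𝓢'(E, F)) = (k : 𝓢'(E, F)) + ∑ j, ∂_{e j} (H j : 𝓢'(E, F))) (m : E) :
    ∃ g : Lp F 2 (volume : Measure E), ∂_{m} (U : 𝓢'(E, F)) = (g : 𝓢'(E, F)) := by
  have memSobolev_zero (f : Lp F 2 (volume : Measure E)) : MemSobolev 0 2 (f : 𝓢'(E, F)) :=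
    memSobolev_zero_iff.2 ⟨f, rfl⟩
  have memSobolev_neg_one (f : Lp F 2 (volume : Measure E)) : MemSobolev (-1) 2 (f : 𝓢'(E, F)) :=
    (memSobolev_zero f).mono (by norm_num)
  have hΔ : MemSobolev (-1) 2 (Δ (U : 𝓢'(E, F))) := by
    rw [h]
    refine (memSobolev_neg_one k).add (memSobolev_sum _ fun j _ => ?_)
    simpa using (memSobolev_zero (H j)).lineDerivOp (m := e j)
  have hU : MemSobolev 1 2 (U : 𝓢'(E, F)) := by
    have := memSobolev_add_two_of_laplacian (memSobolev_neg_one U) hΔ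
    norm_num at this
    exact this
  have hDU : MemSobolev 0 2 (∂_{m} (U : 𝓢'(E, F))) := by simpa using hU.lineDerivOp (m := m)
  exact memSobolev_zero_iff.1 hDU

end TemperedSobolev

section FunctionSpaces

theorem l2loc_iff_memLp {f : Pt n → ℂ} :
    L2loc f ↔ AEStronglyMeasurable f (volume : Measure (Pt n)) ∧
      ∀ K : Set (Pt n), IsCompact K → MemLp f 2 (volume.restrict K) := by
  unfold L2loc
  refine and_congr_right fun hf => forall₂_congr fun K _ => ?_
  rw [memLp_two_iff_integrable_sq_norm hf.restrict]
  rfl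

variable (n) in
/-- The space `L²_loc(ℝⁿ)`. -/
def l2locSubmodule : Submodule ℂ (Pt n → ℂ) where
  carrier := {f | L2loc f}
  zero_mem' := l2loc_iff_memLp.2 ⟨aestronglyMeasurable_const, fun _ _ => MemLp.zero⟩
  add_mem' hf hg := by
    simp only [Set.mem_ofPred_eq, l2loc_iff_memLp] at hf hg ⊢
    exact ⟨hf.1.add hg.1, fun K hK => (hf.2 K hK).add (hg.2 K hK)⟩
  smul_mem' c f hf := by
    simp only [Set.mem_ofPred_eq, l2loc_iff_memLp] at hf ⊢
    exact ⟨hf.1.const_smul c, fun K hK => (hf.2 K hK).const_smul c⟩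

variable (n) in
/-- The space of continuous compactly supported functions on `ℝⁿ`. -/
def ccSubmodule : Submodule ℂ (Pt n → ℂ) where
  carrier := {f | Continuous f ∧ HasCompactSupport f}
  zero_mem' := ⟨continuous_zero, HasCompactSupport.zero⟩
  add_mem' hf hg := ⟨hf.1.add hg.1, hf.2.add hg.2⟩
  smul_mem' c _ hf := ⟨hf.1.const_smul c, hf.2.smul_left (f := fun _ => c)⟩

variable (n) in
/-- The space of test functions on `ℝⁿ`. -/
def testSubmodule : Submodule ℂ (Pt n → ℂ) where
  carrier := {f | IsTest f}
  zero_mem' := ⟨contDiff_const, HasCompactSupport.zero⟩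
  add_mem' hf hg := ⟨hf.1.add hg.1, hf.2.add hg.2⟩
  smul_mem' c _ hf := ⟨hf.1.const_smul c, hf.2.smul_left (f := fun _ => c)⟩

/-- The graded forms all of whose components lie in the function space `V`. -/
def formsIn (V : Submodule ℂ (Pt n → ℂ)) : Submodule ℂ (Form n) where
  carrier := {u | ∀ S, (fun x => u x S) ∈ V}
  zero_mem' _ := V.zero_mem
  add_mem' hu hv S := V.add_mem (hu S) (hv S)
  smul_mem' c _ hu S := V.smul_mem c (hu S)

variable {V : Submodule ℂ (Pt n → ℂ)} {u : Form n} {f c ψ : Pt n → ℂ}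

theorem map_mem_formsIn (M : GF n →ₗ[ℂ] GF n) (hu : u ∈ formsIn V) :
    (fun x => M (u x)) ∈ formsIn V := fun S => by
  have expansion : (fun x => M (u x) S) =
      ∑ T, (M fun T' => if T = T' then 1 else 0) S • fun x => u x T := by
    funext x
    rw [LinearMap.pi_apply_eq_sum_univ M (u x)]
    simp [mul_comm]
  rw [expansion]
  exact V.sum_mem fun T _ => V.smul_mem _ (hu T)

theorem L2loc.continuous_mul (hf : L2loc f) (hc : Continuous c) :
    L2loc fun x => c x * f x := by
  rw [l2loc_iff_memLp] at *
  refine ⟨hc.aestronglyMeasurable.mul hf.1, fun K hK => ?_⟩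
  obtain ⟨M, hM⟩ := hK.exists_bound_of_continuousOn hc.continuousOn
  refine (hf.2 K hK).of_le_mul (c := M) (hc.aestronglyMeasurable.mul hf.1).restrict ?_
  filter_upwards [ae_restrict_mem hK.measurableSet] with x hx
  rw [norm_mul]
  exact mul_le_mul_of_nonneg_right (hM x hx) (norm_nonneg _)

theorem L2loc.memLp_cc_mul (hf : L2loc f) (hψ : ψ ∈ ccSubmodule n) :
    MemLp (fun x => ψ x * f x) 2 volume := by
  have vanish_off_tsupport : Function.support (fun x => ψ x * f x) ⊆ tsupport ψ :=
    (Function.support_mul_subset_left _ _).trans subset_closure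
  rw [← Set.indicator_eq_self.2 vanish_off_tsupport,
    memLp_indicator_iff_restrict (isClosed_tsupport ψ).measurableSet]
  exact (l2loc_iff_memLp.1 (hf.continuous_mul hψ.1)).2 _ hψ.2

theorem L2loc.locallyIntegrable (hf : L2loc f) : LocallyIntegrable f volume := by
  refine locallyIntegrable_iff.2 fun K hK => ?_
  have : IsFiniteMeasure ((volume : Measure (Pt n)).restrict K) :=
    ⟨by simpa using hK.measure_lt_top⟩
  exact ((l2loc_iff_memLp.1 hf).2 K hK).integrable (by norm_num)

theorem integrable_mul_cc (hf : LocallyIntegrable f volume) (hψ : ψ ∈ ccSubmodule n) :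
    Integrable fun x => f x * ψ x :=
  hf.integrable_smul_right_of_hasCompactSupport hψ.1 hψ.2

theorem L2loc.integrable_mul_cc (hf : L2loc f) (hψ : ψ ∈ ccSubmodule n) :
    Integrable fun x => f x * ψ x :=
  EMPaper.integrable_mul_cc hf.locallyIntegrable hψ

theorem l2loc_of_memLp (hf : MemLp f 2 volume) : L2loc f :=
  l2loc_iff_memLp.2 ⟨hf.1, fun _ _ => hf.restrict _⟩

theorem IsTest.mem_ccSubmodule (hψ : IsTest ψ) : ψ ∈ ccSubmodule n := ⟨hψ.1.continuous, hψ.2⟩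

theorem mul_mem_ccSubmodule (hc : Continuous c) (hψ : ψ ∈ ccSubmodule n) :
    (fun x => c x * ψ x) ∈ ccSubmodule n :=
  ⟨hc.mul hψ.1, hψ.2.mul_left⟩

theorem smul_mem_formsIn_l2loc (hc : Continuous c) (hu : u ∈ formsIn (l2locSubmodule n)) :
    (fun x => c x • u x) ∈ formsIn (l2locSubmodule n) :=
  fun S => (hu S).continuous_mul hc

theorem integrable_mul_ginner {φ : Form n} (hc : Continuous c)
    (hu : u ∈ formsIn (l2locSubmodule n)) (hφ : φ ∈ formsIn (ccSubmodule n)) :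
    Integrable fun x => c x * ginner (u x) (φ x) := by
  simp only [ginner, Finset.mul_sum, ← mul_assoc]
  exact integrable_finsetSum _ fun S _ => ((hu S).continuous_mul hc).integrable_mul_cc (hφ S)

end FunctionSpaces

section PartialDerivatives

variable {f g : Pt n → ℂ}

theorem pd_add {x : Pt n} (hf : DifferentiableAt ℝ f x) (hg : DifferentiableAt ℝ g x) (j : Fin n) :
    pd j (fun y => f y + g y) x = pd j f x + pd j g x := by
  simp [pd, fderiv_fun_add hf hg]

theorem pd_mul {x : Pt n} (hf : DifferentiableAt ℝ f x) (hg : DifferentiableAt ℝ g x) (j : Fin n) :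
    pd j (fun y => f y * g y) x = pd j f x * g x + f x * pd j g x := by
  simp [pd, fderiv_fun_mul hf hg]
  ring

theorem contDiff_pd (hf : ContDiff ℝ (⊤ : ℕ∞) f) (j : Fin n) : ContDiff ℝ (⊤ : ℕ∞) (pd j f) :=
  (hf.fderiv_right (m := (⊤ : ℕ∞)) (by simp)).clm_apply contDiff_const

theorem continuous_pd (hf : ContDiff ℝ 1 f) (j : Fin n) : Continuous (pd j f) :=
  (hf.continuous_fderiv one_ne_zero).clm_apply continuous_const

theorem pd_comm (hf : ContDiff ℝ (⊤ : ℕ∞) f) (i j : Fin n) (x : Pt n) :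
    pd i (pd j f) x = pd j (pd i f) x := by
  have pd_pd_eq_fderiv (k l : Fin n) : pd k (pd l f) x =
      fderiv ℝ (fderiv ℝ f) x (Pi.single k 1) (Pi.single l 1) := by
    have : DifferentiableAt ℝ (fderiv ℝ f) x :=
      ((hf.fderiv_right (m := (⊤ : ℕ∞)) (by simp)).differentiable (by simp)).differentiableAt
    unfold pd
    rw [fderiv_clm_apply this (by fun_prop)]
    simp
  rw [pd_pd_eq_fderiv, pd_pd_eq_fderiv]
  have two_le_top : (2 : WithTop ℕ∞) ≤ (⊤ : ℕ∞) :=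
    WithTop.coe_le_coe.2 (le_top : (2 : ℕ∞) ≤ ⊤)
  exact hf.contDiffAt.isSymmSndFDerivAt (by simpa using two_le_top) _ _

theorem pd_eq_zero_of_notMem_tsupport {x : Pt n} (j : Fin n) (hx : x ∉ tsupport f) :
    pd j f x = 0 := by
  have : x ∉ tsupport (fderiv ℝ f) := fun h => hx (tsupport_fderiv_subset ℝ h)
  simp [pd, image_eq_zero_of_notMem_tsupport this]

theorem IsTest.pd (hf : IsTest f) (j : Fin n) : IsTest (pd j f) :=
  ⟨contDiff_pd hf.1 j, hf.2.fderiv_apply ℝ (Pi.single j 1)⟩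

theorem IsTest.mul_contDiff (hf : IsTest f) (hg : ContDiff ℝ (⊤ : ℕ∞) g) :
    IsTest fun x => f x * g x :=
  ⟨hf.1.mul hg, hf.2.mul_right⟩

theorem isTest_ofReal {r : Pt n → ℝ} (hr : ContDiff ℝ (⊤ : ℕ∞) r) (hc : HasCompactSupport r) :
    IsTest fun x => (r x : ℂ) :=
  ⟨Complex.ofRealCLM.contDiff.comp hr, hc.comp_left Complex.ofReal_zero⟩

/-- The flat Laplacian `∑ⱼ ∂ⱼ²`. -/
def lap (f : Pt n → ℂ) (x : Pt n) : ℂ := ∑ j, pd j (pd j f) x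

theorem IsTest.lap (hf : IsTest f) : IsTest (lap f) := by
  have : EMPaper.lap f = ∑ j, EMPaper.pd j (EMPaper.pd j f) := by
    ext x
    simp [EMPaper.lap]
  rw [this]
  exact (testSubmodule n).sum_mem fun j _ => (hf.pd j).pd j

theorem lap_mul (hf : ContDiff ℝ (⊤ : ℕ∞) f) (hg : ContDiff ℝ (⊤ : ℕ∞) g) (x : Pt n) :
    lap (fun y => f y * g y) x =
      lap f x * g x + 2 * ∑ j, pd j f x * pd j g x + f x * lap g x := by
  have differentiable {h : Pt n → ℂ} (hh : ContDiff ℝ (⊤ : ℕ∞) h) : Differentiable ℝ h :=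
    hh.differentiable (by simp)
  have pd_eq (j : Fin n) :
      pd j (fun y => f y * g y) = fun y => pd j f y * g y + f y * pd j g y :=
    funext fun y => pd_mul (differentiable hf y) (differentiable hg y) j
  have pd_pd_eq (j : Fin n) : pd j (pd j fun y => f y * g y) x =
      pd j (pd j f) x * g x + 2 * (pd j f x * pd j g x) + f x * pd j (pd j g) x := by
    have hf' := differentiable (contDiff_pd hf j)
    have hg' := differentiable (contDiff_pd hg j)
    rw [pd_eq,
      pd_add ((hf' x).fun_mul (differentiable hg x)) ((differentiable hf x).fun_mul (hg' x)),
      pd_mul (hf' x) (differentiable hg x), pd_mul (differentiable hf x) (hg' x)]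
    ring
  simp only [lap, pd_pd_eq, Finset.sum_add_distrib, Finset.sum_mul, Finset.mul_sum]

end PartialDerivatives

section SchwartzTransfer

open TemperedDistribution LineDeriv Laplacian SchwartzMap

/-- A Schwartz function on Euclidean space, read on the coordinate space `Fin n → ℝ`, whose norm is
not Euclidean and on which Mathlib therefore has no Fourier transform. -/
def coord (ψ : 𝓢(EuclideanSpace ℝ (Fin n), ℂ)) (x : Pt n) : ℂ := ψ (WithLp.toLp 2 x)

variable {f : Pt n → ℂ} (ψ : 𝓢(EuclideanSpace ℝ (Fin n), ℂ))

theorem contDiff_coord : ContDiff ℝ (⊤ : ℕ∞) (coord ψ) :=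
  (ψ.smooth _).comp (EuclideanSpace.equiv (Fin n) ℝ).symm.contDiff

theorem coord_lineDeriv (j : Fin n) :
    coord (∂_{EuclideanSpace.single j (1 : ℝ)} ψ) = pd j (coord ψ) := by
  funext x
  have chain : HasFDerivAt (coord ψ) ((fderiv ℝ ψ (WithLp.toLp 2 x)).comp
      ((EuclideanSpace.equiv (Fin n) ℝ).symm : Pt n →L[ℝ] EuclideanSpace ℝ (Fin n))) x :=
    HasFDerivAt.comp x ψ.differentiableAt.hasFDerivAt
      (EuclideanSpace.equiv (Fin n) ℝ).symm.hasFDerivAt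
  rw [pd, chain.fderiv, coord, SchwartzMap.lineDerivOp_apply_eq_fderiv]
  rfl

theorem coord_laplacian : coord (Δ ψ) = lap (coord ψ) := by
  funext x
  rw [coord, SchwartzMap.laplacian_eq_sum (EuclideanSpace.basisFun (Fin n) ℝ)]
  simp only [EuclideanSpace.basisFun_apply, _root_.sum_apply, lap, ← coord_lineDeriv]
  rfl

theorem exists_coord_eq {p : Pt n → ℂ} (hp : IsTest p) :
    ∃ ψ : 𝓢(EuclideanSpace ℝ (Fin n), ℂ), coord ψ = p := by
  have hc : HasCompactSupport fun y : EuclideanSpace ℝ (Fin n) => p (WithLp.ofLp y) :=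
    hp.2.comp_homeomorph (EuclideanSpace.equiv (Fin n) ℝ).toHomeomorph
  exact ⟨hc.toSchwartzMap (hp.1.comp (EuclideanSpace.equiv (Fin n) ℝ).contDiff), rfl⟩

theorem integral_comp_toLp (f : EuclideanSpace ℝ (Fin n) → ℂ) :
    ∫ x : Pt n, f (WithLp.toLp 2 x) = ∫ y, f y :=
  (PiLp.volume_preserving_toLp (Fin n)).integral_comp
    (MeasurableEquiv.toLp 2 (Fin n → ℝ)).measurableEmbedding f

/-- An `L²` function on the coordinate space, as an element of `L²` of Euclidean space. -/
def euclLp (hf : MemLp f 2 volume) : Lp ℂ 2 (volume : Measure (EuclideanSpace ℝ (Fin n))) :=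
  (hf.comp_measurePreserving (PiLp.volume_preserving_ofLp (Fin n))).toLp

theorem toTemperedDistribution_euclLp (hf : MemLp f 2 volume) :
    Lp.toTemperedDistribution (euclLp hf) ψ = ∫ x, f x * coord ψ x := by
  rw [Lp.toTemperedDistribution_apply]
  calc ∫ y, ψ y • (euclLp hf) y = ∫ y, f (WithLp.ofLp y) * ψ y := by
        refine integral_congr_ae ?_
        filter_upwards [(hf.comp_measurePreserving
          (PiLp.volume_preserving_ofLp (Fin n))).coeFn_toLp] with y hy
        rw [euclLp, hy, smul_eq_mul, mul_comm, Function.comp_apply]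
    _ = ∫ x, f x * coord ψ x := (integral_comp_toLp _).symm

theorem lineDeriv_toTemperedDistribution_euclLp (hf : MemLp f 2 volume) (j : Fin n) :
    (∂_{EuclideanSpace.single j (1 : ℝ)} (Lp.toTemperedDistribution (euclLp hf))) ψ =
      -∫ x, f x * pd j (coord ψ) x := by
  rw [TemperedDistribution.lineDerivOp_apply_apply, map_neg, toTemperedDistribution_euclLp,
    coord_lineDeriv]

theorem exists_memLp_hasWeakPD_of_lap {u k : Pt n → ℂ} {H : Fin n → Pt n → ℂ}
    (hu : MemLp u 2 volume) (hk : MemLp k 2 volume) (hH : ∀ j, MemLp (H j) 2 volume)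
    (h : ∀ ψ : 𝓢(EuclideanSpace ℝ (Fin n), ℂ), ∫ x, u x * lap (coord ψ) x =
      (∫ x, k x * coord ψ x) - ∑ j, ∫ x, H j x * pd j (coord ψ) x) (i : Fin n) :
    ∃ v : Pt n → ℂ, MemLp v 2 volume ∧ HasWeakPD i u v := by
  obtain ⟨g, hg⟩ := exists_lineDeriv_eq_of_laplacian_eq
    (fun j : Fin n => EuclideanSpace.single j (1 : ℝ)) (euclLp hu) (euclLp hk)
    (fun j => euclLp (hH j)) (by
      ext ψ
      simp [-Lp.toTemperedDistribution_apply, -TemperedDistribution.lineDerivOp_apply_apply,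
        toTemperedDistribution_euclLp, lineDeriv_toTemperedDistribution_euclLp, coord_laplacian, h,
        sub_eq_add_neg])
    (EuclideanSpace.single i (1 : ℝ))
  refine ⟨fun x => g (WithLp.toLp 2 x), (Lp.memLp g).comp_measurePreserving
    (PiLp.volume_preserving_toLp (Fin n)), fun p hp => ?_⟩
  obtain ⟨ψ, rfl⟩ := exists_coord_eq hp
  calc ∫ x, g (WithLp.toLp 2 x) * coord ψ x = ∫ y, ψ y • g y := by
        rw [← integral_comp_toLp]
        simp only [coord, smul_eq_mul, mul_comm]
    _ = -∫ x, u x * pd i (coord ψ) x := by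
        rw [← Lp.toTemperedDistribution_apply, ← hg, lineDeriv_toTemperedDistribution_euclLp]

end SchwartzTransfer

section InteriorRegularity

variable {u : Pt n → ℂ} {F : Fin n → Pt n → ℂ}

/-- `Δu = -∑ⱼ ∂ⱼFⱼ` in the sense of distributions. -/
def HasWeakLap (u : Pt n → ℂ) (F : Fin n → Pt n → ℂ) : Prop :=
  ∀ ψ : Pt n → ℂ, IsTest ψ → ∫ x, u x * lap ψ x = ∑ j, ∫ x, F j x * pd j ψ x

theorem mul_lap_eq_lap_mul_sub {χ p : Pt n → ℂ} (hχ : ContDiff ℝ (⊤ : ℕ∞) χ)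
    (hp : ContDiff ℝ (⊤ : ℕ∞) p) (x : Pt n) (u : ℂ) (F : Fin n → ℂ) :
    χ x * u * lap p x =
      ((∑ j, pd j χ x * F j - lap χ x * u) * p x
        - ∑ j, (2 * (pd j χ x * u) - χ x * F j) * pd j p x) +
      (u * lap (fun y => χ y * p y) x - ∑ j, F j * pd j (fun y => χ y * p y) x) := by
  have pd_cutoff (j : Fin n) :
      pd j (fun y => χ y * p y) x = pd j χ x * p x + χ x * pd j p x :=
    pd_mul (hχ.differentiable (by simp) x) (hp.differentiable (by simp) x) j
  simp only [lap_mul hχ hp, pd_cutoff, sub_mul, Finset.sum_sub_distrib, mul_add,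
    Finset.sum_add_distrib, Finset.sum_mul, Finset.mul_sum]
  simp only [mul_comm, mul_left_comm, mul_assoc]
  ring

theorem HasWeakLap.integral_cutoff (h : HasWeakLap u F) (hu : L2loc u) (hF : ∀ j, L2loc (F j))
    {χ p : Pt n → ℂ} (hχ : IsTest χ) (hp : ContDiff ℝ (⊤ : ℕ∞) p) :
    ∫ x, χ x * u x * lap p x =
      (∫ x, (∑ j, pd j χ x * F j x - lap χ x * u x) * p x) -
        ∑ j, ∫ x, (2 * (pd j χ x * u x) - χ x * F j x) * pd j p x := by
  have integrable {f c q : Pt n → ℂ} (hf : L2loc f) (hc : IsTest c)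
      (hq : ContDiff ℝ (⊤ : ℕ∞) q) : Integrable fun x => c x * f x * q x := by
    simpa only [mul_comm, mul_left_comm, mul_assoc] using
      hf.integrable_mul_cc (hc.mul_contDiff hq).mem_ccSubmodule
  have hzero : Integrable fun x => (∑ j, pd j χ x * F j x - lap χ x * u x) * p x := by
    simp only [sub_mul, Finset.sum_mul]
    exact (integrable_finsetSum _ fun j _ => integrable (hF j) (hχ.pd j) hp).sub
      (integrable hu hχ.lap hp)
  have hfirst (j : Fin n) :
      Integrable fun x => (2 * (pd j χ x * u x) - χ x * F j x) * pd j p x := by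
    simp only [sub_mul, mul_assoc (2 : ℂ)]
    exact ((integrable hu (hχ.pd j) (contDiff_pd hp j)).const_mul 2).sub
      (integrable (hF j) hχ (contDiff_pd hp j))
  have hχp : IsTest fun x => χ x * p x := hχ.mul_contDiff hp
  have hlap := hu.integrable_mul_cc hχp.lap.mem_ccSubmodule
  have hpd := integrable_finsetSum univ fun j _ =>
    (hF j).integrable_mul_cc (hχp.pd j).mem_ccSubmodule
  have weak_eq : ∫ x, (u x * lap (fun y => χ y * p y) x -
      ∑ j, F j x * pd j (fun y => χ y * p y) x) = 0 := by
    rw [integral_sub hlap hpd, integral_finsetSum _ fun j _ =>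
      (hF j).integrable_mul_cc (hχp.pd j).mem_ccSubmodule, h _ hχp, sub_self]
  have hfirst_sum := integrable_finsetSum univ fun j _ => hfirst j
  rw [integral_congr_ae (.of_forall fun x =>
      mul_lap_eq_lap_mul_sub hχ.1 hp x (u x) fun j => F j x),
    integral_add (hzero.sub' hfirst_sum) (hlap.sub' hpd), weak_eq, add_zero,
    integral_sub hzero hfirst_sum, integral_finsetSum _ fun j _ => hfirst j]

theorem HasWeakLap.exists_memLp_hasWeakPD_cutoff (h : HasWeakLap u F) (hu : L2loc u)
    (hF : ∀ j, L2loc (F j)) {χ : Pt n → ℂ} (hχ : IsTest χ) (i : Fin n) :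
    ∃ v : Pt n → ℂ, MemLp v 2 volume ∧ HasWeakPD i (fun x => χ x * u x) v :=
  exists_memLp_hasWeakPD_of_lap (hu.memLp_cc_mul hχ.mem_ccSubmodule)
    ((memLp_finsetSum _ fun j _ => (hF j).memLp_cc_mul (hχ.pd j).mem_ccSubmodule).sub
      (hu.memLp_cc_mul hχ.lap.mem_ccSubmodule))
    (fun j => ((hu.memLp_cc_mul (hχ.pd j).mem_ccSubmodule).const_mul 2).sub
      ((hF j).memLp_cc_mul hχ.mem_ccSubmodule))
    (fun ψ => h.integral_cutoff hu hF hχ (contDiff_coord ψ)) i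

theorem ae_eq_on_of_integral_mul_test_eq {U : Set (Pt n)} (hU : IsOpen U) {f g : Pt n → ℂ}
    (hf : MemLp f 2 volume) (hg : MemLp g 2 volume)
    (h : ∀ ψ : Pt n → ℂ, IsTest ψ → tsupport ψ ⊆ U → ∫ x, f x * ψ x = ∫ x, g x * ψ x) :
    ∀ᵐ x, x ∈ U → f x = g x := by
  have hlocal : LocallyIntegrableOn (fun x => f x - g x) U volume :=
    ((hf.sub hg).locallyIntegrable (by norm_num)).locallyIntegrableOn _
  have vanish := hU.ae_eq_zero_of_integral_contDiff_smul_eq_zero hlocal fun r hr hc hs => by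
    have htest := isTest_ofReal hr hc
    have htsupport : tsupport (fun x => (r x : ℂ)) ⊆ U := by
      refine (closure_mono fun x hx => ?_).trans hs
      simpa using hx
    have hint {f : Pt n → ℂ} (hf : MemLp f 2 volume) : Integrable fun x => f x * (r x : ℂ) :=
      (l2loc_of_memLp hf).integrable_mul_cc htest.mem_ccSubmodule
    simp only [Complex.real_smul, mul_comm (r _ : ℂ), sub_mul]
    rw [integral_sub (hint hf) (hint hg), h _ htest htsupport, sub_self]
  filter_upwards [vanish] with x hx hxU
  exact sub_eq_zero.1 (hx hxU)

theorem exists_ae_eq_of_ae_eq_exhaustion {α β : Type*} [MeasurableSpace α] {μ : Measure α}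
    (level : α → ℕ) (h : ℕ → α → β)
    (agree : ∀ k N, k ≤ N → ∀ᵐ x ∂μ, level x ≤ k → h k x = h N x) :
    ∃ H : α → β, ∀ N, ∀ᵐ x ∂μ, level x ≤ N → H x = h N x := by
  refine ⟨fun x => h (level x) x, fun N => ?_⟩
  have agree_all : ∀ᵐ x ∂μ, ∀ k, k ≤ N → level x ≤ k → h k x = h N x :=
    ae_all_iff.2 fun k => Filter.eventually_imp_distrib_left.2 (agree k N)
  filter_upwards [agree_all] with x hx hN using hx _ hN le_rfl

theorem exists_subset_ball_nat {K : Set (Pt n)} (hK : IsCompact K) :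
    ∃ N : ℕ, K ⊆ Metric.ball 0 ((N : ℝ) + 1) := by
  obtain ⟨r, hr⟩ := hK.isBounded.subset_ball (0 : Pt n)
  obtain ⟨N, hN⟩ := exists_nat_ge r
  exact ⟨N, hr.trans (Metric.ball_subset_ball (by linarith))⟩

theorem l2loc_of_ae_eq_on_balls {f : Pt n → ℂ} {h : ℕ → Pt n → ℂ} (hh : ∀ N, MemLp (h N) 2 volume)
    (hf : ∀ N : ℕ, ∀ᵐ x, x ∈ Metric.ball 0 ((N : ℝ) + 1) → f x = h N x) : L2loc f := by
  have hf' (N : ℕ) : f =ᵐ[volume.restrict (Metric.ball 0 ((N : ℝ) + 1))] h N :=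
    (ae_restrict_iff' Metric.isOpen_ball.measurableSet).2 (hf N)
  refine l2loc_iff_memLp.2 ⟨?_, fun K hK => ?_⟩
  · have cover : (⋃ N : ℕ, Metric.ball (0 : Pt n) ((N : ℝ) + 1)) = Set.univ := by
      refine Set.eq_univ_of_forall fun x => Set.mem_iUnion.2 ?_
      obtain ⟨N, hN⟩ := exists_subset_ball_nat (isCompact_singleton (x := x))
      exact ⟨N, hN rfl⟩
    rw [← Measure.restrict_univ (μ := (volume : Measure (Pt n))), ← cover,
      aestronglyMeasurable_iUnion_iff]
    exact fun N => (hh N).1.restrict.congr (hf' N).symm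
  · obtain ⟨N, hN⟩ := exists_subset_ball_nat hK
    exact (((hh N).restrict _).ae_eq (hf' N).symm).mono_measure (Measure.restrict_mono hN le_rfl)

theorem exists_isTest_eq_one_on_ball (r : ℝ) :
    ∃ χ : Pt n → ℂ, IsTest χ ∧ ∀ x ∈ Metric.ball 0 r, χ x = 1 := by
  let B : ContDiffBump (0 : Pt n) := ⟨max r 1, max r 1 + 1, by positivity, by linarith⟩
  refine ⟨fun x => (B x : ℂ), isTest_ofReal B.contDiff B.hasCompactSupport, fun x hx => ?_⟩
  have : x ∈ Metric.closedBall 0 B.rIn :=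
    Metric.ball_subset_closedBall (Metric.ball_subset_ball (le_max_left r 1) hx)
  simp [B.one_of_mem_closedBall this]

theorem HasWeakLap.exists_hasWeakPD (h : HasWeakLap u F) (hu : L2loc u) (hF : ∀ j, L2loc (F j))
    (i : Fin n) : ∃ v : Pt n → ℂ, HasWeakPD i u v ∧ L2loc v := by
  choose χ hχ hχ_one using fun N : ℕ => exists_isTest_eq_one_on_ball (n := n) ((N : ℝ) + 1)
  choose v hv hv_pd using fun N => h.exists_memLp_hasWeakPD_cutoff hu hF (hχ N) i
  have local_pd (N : ℕ) (ψ : Pt n → ℂ) (hψ : IsTest ψ)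
      (hs : tsupport ψ ⊆ Metric.ball 0 ((N : ℝ) + 1)) :
      ∫ x, v N x * ψ x = -∫ x, u x * pd i ψ x := by
    rw [hv_pd N ψ hψ]
    congr 2 with x
    by_cases hx : x ∈ tsupport ψ
    · simp [hχ_one N x (hs hx)]
    · simp [pd_eq_zero_of_notMem_tsupport i hx]
  have level_le_iff (N : ℕ) (x : Pt n) : ⌊‖x‖⌋₊ ≤ N ↔ x ∈ Metric.ball 0 ((N : ℝ) + 1) := by
    rw [← Nat.lt_succ_iff, Nat.floor_lt (norm_nonneg x), mem_ball_zero_iff, Nat.cast_succ]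
  obtain ⟨V, hV⟩ := exists_ae_eq_of_ae_eq_exhaustion (fun x : Pt n => ⌊‖x‖⌋₊) v
    fun k N hkN => by
      simp only [level_le_iff]
      refine ae_eq_on_of_integral_mul_test_eq Metric.isOpen_ball (hv k) (hv N) fun ψ hψ hs => ?_
      have hs' : tsupport ψ ⊆ Metric.ball 0 ((N : ℝ) + 1) :=
        hs.trans (Metric.ball_subset_ball (by gcongr))
      rw [local_pd k ψ hψ hs, local_pd N ψ hψ hs']
  simp only [level_le_iff] at hV
  refine ⟨V, fun ψ hψ => ?_, l2loc_of_ae_eq_on_balls hv hV⟩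
  obtain ⟨N, hN⟩ := exists_subset_ball_nat hψ.2
  rw [← local_pd N ψ hψ hN]
  refine integral_congr_ae ?_
  filter_upwards [hV N] with x hx
  by_cases hs : x ∈ tsupport ψ
  · rw [hx (hN hs)]
  · simp [image_eq_zero_of_notMem_tsupport hs]

end InteriorRegularity

section ExteriorAlgebra

theorem msgn_singleton_insert {j k : Fin n} {S : Finset (Fin n)} (hk : k ∉ S) :
    msgn {j} (insert k S) = (if k < j then -1 else 1) * msgn {j} S := by
  have fiber (T : Finset (Fin n)) :
      (({j} ×ˢ T).filter fun p => p.2 < p.1).card = (T.filter (· < j)).card := by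
    rw [singleton_product, filter_map, card_map]
    rfl
  simp only [msgn, fiber, filter_insert]
  split_ifs
  · rw [card_insert_of_notMem (by simp [hk]), pow_succ']
  · rw [one_mul]

theorem msgn_singleton_erase {j k : Fin n} {S : Finset (Fin n)} (hk : k ∈ S) :
    msgn {j} (S.erase k) = (if k < j then -1 else 1) * msgn {j} S := by
  conv_rhs => rw [← insert_erase hk, msgn_singleton_insert (notMem_erase k S)]
  split_ifs <;> ring

theorem msgn_singleton_erase_self (j : Fin n) (S : Finset (Fin n)) :
    msgn {j} (S.erase j) = msgn {j} S := by
  by_cases hj : j ∈ S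
  · simp [msgn_singleton_erase hj]
  · rw [erase_eq_of_notMem hj]

theorem msgn_mul_self (S T : Finset (Fin n)) : msgn S T * msgn S T = 1 := by
  simp [msgn, ← pow_add, ← two_mul, pow_mul]

theorem msgn_singleton_right {j : Fin n} {S : Finset (Fin n)} (hj : j ∉ S) :
    msgn S {j} = (-1) ^ S.card * msgn {j} S := by
  induction S using Finset.induction_on with
  | empty => simp [msgn]
  | insert k S hk ih =>
    obtain ⟨hjk, hjS⟩ := not_or.1 (mem_insert.not.1 hj)
    have peel : msgn (insert k S) {j} = (if j < k then -1 else 1) * msgn S {j} := by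
      have fiber (T : Finset (Fin n)) :
          ((T ×ˢ {j}).filter fun p => p.2 < p.1).card = (T.filter (j < ·)).card := by
        rw [product_singleton, filter_map, card_map]
        rfl
      simp only [msgn, fiber, filter_insert]
      split_ifs
      · rw [card_insert_of_notMem (by simp [hk]), pow_succ']
      · rw [one_mul]
    rw [peel, ih hjS, msgn_singleton_insert hk, card_insert_of_notMem hk, pow_succ]
    rcases lt_or_gt_of_ne hjk with h | h <;> simp [h, h.not_gt]

/-- Exterior multiplication `dxʲ ∧ ·`. -/
def extMul (j : Fin n) : Module.End ℂ (GF n) where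
  toFun u S := if j ∈ S then msgn {j} S * u (S.erase j) else 0
  map_add' u v := by
    ext S
    simp only [Pi.add_apply]
    split_ifs <;> ring
  map_smul' c u := by
    ext S
    simp only [Pi.smul_apply, smul_eq_mul, RingHom.id_apply]
    split_ifs <;> ring

/-- Interior multiplication by `dxʲ`, the transpose of `extMul j`. -/
def intMul (j : Fin n) : Module.End ℂ (GF n) where
  toFun u S := if j ∈ S then 0 else msgn {j} S * u (insert j S)
  map_add' u v := by
    ext S
    simp only [Pi.add_apply]
    split_ifs <;> ring
  map_smul' c u := by
    ext S
    simp only [Pi.smul_apply, smul_eq_mul, RingHom.id_apply]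
    split_ifs <;> ring

theorem extMul_apply (j : Fin n) (u : GF n) (S : Finset (Fin n)) :
    extMul j u S = if j ∈ S then msgn {j} S * u (S.erase j) else 0 := rfl

theorem intMul_apply (j : Fin n) (u : GF n) (S : Finset (Fin n)) :
    intMul j u S = if j ∈ S then 0 else msgn {j} S * u (insert j S) := rfl

theorem wedge_dxe (j : Fin n) (u : GF n) : wedge (dxe j) u = extMul j u := by
  ext S
  simp only [wedge, dxe, extMul_apply, mul_ite, mul_one, mul_zero, ite_mul, zero_mul, sum_ite_eq',
    mem_powerset, singleton_subset_iff, sdiff_singleton_eq_erase, msgn_singleton_erase_self]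

theorem vee_dxe (j : Fin n) (u : GF n) : vee (dxe j) u = altSign (intMul j u) := by
  ext S
  by_cases hj : j ∈ S
  · simp [vee, dxe, altSign, intMul_apply, hj]
  · simp [vee, dxe, altSign, intMul_apply, hj, msgn_singleton_right, mul_assoc]

theorem oneG_eq_sum (c : Fin n → ℂ) : oneG c = ∑ j, c j • dxe j := by
  ext S
  simp [oneG, dxe]

theorem wedge_oneG (c : Fin n → ℂ) (u : GF n) : wedge (oneG c) u = ∑ j, c j • extMul j u := by
  simp only [← wedge_dxe, oneG_eq_sum]
  ext S
  simp only [wedge, Finset.sum_apply, Pi.smul_apply, smul_eq_mul, mul_sum, sum_mul]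
  rw [sum_comm]
  exact sum_congr rfl fun j _ => sum_congr rfl fun T _ => by ring

theorem vee_oneG (c : Fin n → ℂ) (u : GF n) :
    vee (oneG c) u = altSign (∑ j, c j • intMul j u) := by
  have : altSign (∑ j, c j • intMul j u) = ∑ j, c j • vee (dxe j) u := by
    ext S
    simp only [vee_dxe, altSign, Finset.sum_apply, Pi.smul_apply, smul_eq_mul, mul_sum]
    exact sum_congr rfl fun j _ => by ring
  rw [this, oneG_eq_sum]
  ext S
  simp only [vee, Finset.sum_apply, Pi.smul_apply, smul_eq_mul, mul_sum, sum_mul]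
  rw [sum_comm]
  exact sum_congr rfl fun j _ => sum_congr rfl fun T _ => by ring

theorem gd_eq_sum (D : Fin n → GF n) : gd D = ∑ j, extMul j (D j) := by
  ext S
  simp [gd, wedge_dxe]

theorem gdel_eq_sum (D : Fin n → GF n) : gdel D = -∑ j, intMul j (D j) := by
  ext S
  simp [gdel, vee_dxe, altSign, ← mul_sum, ← mul_assoc, pow_succ, ← mul_pow]

theorem extMul_anticomm (i j : Fin n) : extMul i * extMul j + extMul j * extMul i = 0 := by
  refine LinearMap.ext fun u => funext fun S => ?_
  simp only [LinearMap.add_apply, Module.End.mul_apply, Pi.add_apply, extMul_apply, mem_erase,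
    LinearMap.zero_apply, Pi.zero_apply]
  by_cases hi : i ∈ S <;> by_cases hj : j ∈ S <;> simp only [hi, hj, and_true, and_false, if_true,
    if_false, mul_zero, add_zero]
  rcases lt_trichotomy i j with h | rfl | h
  · simp [h.ne, h.ne', msgn_singleton_erase, hi, hj, h, h.not_gt, erase_right_comm (a := j)]
    ring
  · simp
  · simp [h.ne, h.ne', msgn_singleton_erase, hi, hj, h, h.not_gt, erase_right_comm (a := j)]
    ring

theorem intMul_anticomm (i j : Fin n) : intMul i * intMul j + intMul j * intMul i = 0 := by
  refine LinearMap.ext fun u => funext fun S => ?_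
  simp only [LinearMap.add_apply, Module.End.mul_apply, Pi.add_apply, intMul_apply, mem_insert,
    LinearMap.zero_apply, Pi.zero_apply]
  by_cases hi : i ∈ S <;> by_cases hj : j ∈ S <;> simp only [hi, hj, or_true, or_false, if_true,
    if_false, mul_zero, add_zero]
  rcases lt_trichotomy i j with h | rfl | h
  · simp [h.ne, h.ne', msgn_singleton_insert, hi, hj, h, h.not_gt, Finset.insert_comm j]
    ring
  · simp
  · simp [h.ne, h.ne', msgn_singleton_insert, hi, hj, h, h.not_gt, Finset.insert_comm j]
    ring

theorem intMul_mul_extMul (i j : Fin n) :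
    intMul i * extMul j = (if i = j then 1 else 0) - extMul j * intMul i := by
  rw [eq_sub_iff_add_eq]
  refine LinearMap.ext fun u => funext fun S => ?_
  simp only [LinearMap.add_apply, Module.End.mul_apply, Pi.add_apply, intMul_apply, extMul_apply,
    mem_insert, mem_erase]
  obtain rfl | h := eq_or_ne i j
  · by_cases hi : i ∈ S
    · simp [hi, ← mul_assoc, msgn_singleton_erase_self, msgn_mul_self]
    · simp [hi, ← mul_assoc, msgn_singleton_insert, msgn_mul_self]
  · by_cases hi : i ∈ S <;> by_cases hj : j ∈ S <;> simp only [hi, hj, h, h.symm, or_true, or_false,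
      and_true, and_false, ne_eq, not_false_eq_true, if_true, if_false, mul_zero, add_zero,
      LinearMap.zero_apply, Pi.zero_apply]
    rw [msgn_singleton_insert hi, msgn_singleton_erase hj, erase_insert_of_ne h]
    rcases lt_or_gt_of_ne h with h | h <;> simp [h, h.not_gt] <;> ring

theorem ginner_extMul (j : Fin n) (u v : GF n) :
    ginner (extMul j u) v = ginner u (intMul j v) := by
  simp only [ginner, extMul_apply, intMul_apply, ite_mul, zero_mul, mul_ite, mul_zero]
  rw [← sum_filter, sum_ite, sum_const_zero, zero_add]
  refine sum_nbij' (·.erase j) (insert j ·) (by simp) (by simp) (fun S hS => ?_) (fun S hS => ?_)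
    (fun S hS => ?_)
  · exact insert_erase (mem_filter.1 hS).2
  · exact erase_insert (mem_filter.1 hS).2
  · rw [insert_erase (mem_filter.1 hS).2, msgn_singleton_erase_self]
    ring

theorem ginner_eq_dotProduct (u v : GF n) : ginner u v = u ⬝ᵥ v := rfl

theorem ginner_add_left (u v z : GF n) : ginner (u + v) z = ginner u z + ginner v z :=
  add_dotProduct u v z

theorem ginner_intMul (j : Fin n) (u v : GF n) :
    ginner (intMul j u) v = ginner u (extMul j v) := by
  simpa only [ginner_eq_dotProduct, dotProduct_comm] using (ginner_extMul j v u).symm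

theorem exists_ginner_adjoint (M : Module.End ℂ (GF n)) :
    ∃ N : Module.End ℂ (GF n), ∀ u v, ginner (M u) v = ginner u (N v) := by
  refine ⟨(LinearMap.toMatrix' M).transpose.toLin', fun u v => ?_⟩
  rw [ginner_eq_dotProduct, ginner_eq_dotProduct, Matrix.toLin'_apply, Matrix.mulVec_transpose,
    dotProduct_comm u, ← Matrix.dotProduct_mulVec, LinearMap.toMatrix'_mulVec, dotProduct_comm]

theorem ginner_oneG_self (c : Fin n → ℂ) : ginner (oneG c) (oneG c) = ∑ j, c j * c j := by
  have dxe_dotProduct (j : Fin n) (u : GF n) : dxe j ⬝ᵥ u = u {j} := by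
    simp [dotProduct, dxe]
  have oneG_singleton (j : Fin n) : oneG c {j} = c j := by simp [oneG]
  conv_lhs => rw [ginner_eq_dotProduct, oneG_eq_sum, sum_dotProduct, ← oneG_eq_sum]
  simp [dxe_dotProduct, oneG_singleton]

/-- The symbol of the Dirac operator: `d + δ = ∑ⱼ diracSymbol j ∂ⱼ`. -/
def diracSymbol (j : Fin n) : Module.End ℂ (GF n) := extMul j - intMul j

/-- Clifford multiplication by `dxʲ`, of square `+1`, which anticommutes with the Dirac symbol. -/
def cliffordMul (j : Fin n) : Module.End ℂ (GF n) := extMul j + intMul j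

/-- Clifford multiplication by the covector `∑ⱼ cⱼ dxʲ`. -/
def cliffordMulCovector (c : Fin n → ℂ) : Module.End ℂ (GF n) := ∑ j, c j • cliffordMul j

theorem gd_add_gdel (D : Fin n → GF n) : gd D + gdel D = ∑ j, diracSymbol j (D j) := by
  simp only [gd_eq_sum, gdel_eq_sum, diracSymbol, LinearMap.sub_apply, sum_sub_distrib,
    ← sub_eq_add_neg]

theorem ginner_diracSymbol (j : Fin n) (u v : GF n) :
    ginner (diracSymbol j u) v = -ginner u (diracSymbol j v) := by
  have adjoint_extMul := ginner_extMul j u v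
  have adjoint_intMul := ginner_intMul j u v
  simp only [ginner_eq_dotProduct, diracSymbol, LinearMap.sub_apply, sub_dotProduct,
    dotProduct_sub] at *
  rw [adjoint_extMul, adjoint_intMul]
  ring

theorem diracSymbol_anticomm (i j : Fin n) :
    diracSymbol i * diracSymbol j + diracSymbol j * diracSymbol i = if i = j then -2 else 0 := by
  calc _ = (extMul i * extMul j + extMul j * extMul i) + (intMul i * intMul j + intMul j * intMul i)
        - (intMul i * extMul j + extMul j * intMul i)
        - (intMul j * extMul i + extMul i * intMul j) := by
        simp only [diracSymbol, sub_mul, mul_sub]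
        abel
    _ = _ := by
        rw [extMul_anticomm, intMul_anticomm, intMul_mul_extMul, intMul_mul_extMul]
        rcases eq_or_ne i j with rfl | h
        · norm_num
        · simp [h, h.symm]

theorem cliffordMul_anticomm (i j : Fin n) :
    cliffordMul i * cliffordMul j + cliffordMul j * cliffordMul i = if i = j then 2 else 0 := by
  calc _ = (extMul i * extMul j + extMul j * extMul i) + (intMul i * intMul j + intMul j * intMul i)
        + (intMul i * extMul j + extMul j * intMul i)
        + (intMul j * extMul i + extMul i * intMul j) := by
        simp only [cliffordMul, add_mul, mul_add]
        abel
    _ = _ := by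
        rw [extMul_anticomm, intMul_anticomm, intMul_mul_extMul, intMul_mul_extMul]
        rcases eq_or_ne i j with rfl | h
        · norm_num
        · simp [h, h.symm]

theorem sum_sum_mul_apply_of_anticomm {a : Fin n → Module.End ℂ (GF n)} {ε : Module.End ℂ (GF n)}
    (ha : ∀ i j, a i * a j + a j * a i = if i = j then ε + ε else 0) {G : Fin n → Fin n → GF n}
    (hG : ∀ i j, G i j = G j i) :
    ∑ i, ∑ j, (a i * a j) (G i j) = ε (∑ j, G j j) := by
  have swapped : ∑ i, ∑ j, (a i * a j) (G i j) = ∑ i, ∑ j, (a j * a i) (G i j) := by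
    rw [sum_comm]
    exact sum_congr rfl fun i _ => sum_congr rfl fun j _ => by rw [hG]
  have doubled : (2 : ℂ) • ∑ i, ∑ j, (a i * a j) (G i j) = (2 : ℂ) • ε (∑ j, G j j) := by
    calc (2 : ℂ) • ∑ i, ∑ j, (a i * a j) (G i j)
        = ∑ i, ∑ j, (a i * a j + a j * a i) (G i j) := by
          simp only [LinearMap.add_apply, sum_add_distrib, ← swapped, two_smul]
      _ = ∑ j, (ε + ε) (G j j) := by
          refine sum_congr rfl fun i _ => ?_
          rw [sum_eq_single i (fun j _ hj => by simp [ha, hj.symm]) (by simp), ha, if_pos rfl]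
      _ = (2 : ℂ) • ε (∑ j, G j j) := by
          simp only [LinearMap.add_apply, sum_add_distrib, map_sum, two_smul]
  exact smul_right_injective _ (two_ne_zero' ℂ) doubled

theorem cliffordMulCovector_apply_self (c : Fin n → ℂ) (u : GF n) :
    cliffordMulCovector c (cliffordMulCovector c u) = (∑ j, c j * c j) • u := by
  calc cliffordMulCovector c (cliffordMulCovector c u)
      = ∑ i, ∑ j, (cliffordMul i * cliffordMul j : Module.End ℂ (GF n)) ((c i * c j) • u) := by
        rw [sum_comm]
        simp [cliffordMulCovector, smul_sum, smul_smul, mul_comm]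
    _ = (∑ j, c j * c j) • u := by
        rw [sum_sum_mul_apply_of_anticomm (ε := 1)
          (fun i j => by norm_num [cliffordMul_anticomm]) fun i j => by rw [mul_comm],
          Module.End.one_apply, sum_smul]

theorem diracSymbol_mul_cliffordMul (i j : Fin n) :
    diracSymbol j * cliffordMul i = -(cliffordMul i * diracSymbol j) := by
  rw [eq_neg_iff_add_eq_zero]
  calc _ = (extMul i * extMul j + extMul j * extMul i) - (intMul i * intMul j + intMul j * intMul i)
        + (intMul i * extMul j + extMul j * intMul i)
        - (intMul j * extMul i + extMul i * intMul j) := by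
        simp only [cliffordMul, diracSymbol, add_mul, mul_add, sub_mul, mul_sub]
        abel
    _ = 0 := by
        rw [extMul_anticomm, intMul_anticomm, intMul_mul_extMul, intMul_mul_extMul]
        simp [eq_comm]

/-- The part of `cliffordMul i * diracSymbol j` that is symmetric in `i` and `j`. -/
def symmSymbol (i j : Fin n) : Module.End ℂ (GF n) :=
  (if i = j then 1 else 0) - (extMul i * intMul j + extMul j * intMul i)

theorem cliffordMul_mul_diracSymbol (i j : Fin n) :
    cliffordMul i * diracSymbol j =
      symmSymbol i j + (extMul i * extMul j - intMul i * intMul j) := by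
  have := intMul_mul_extMul i j
  calc cliffordMul i * diracSymbol j = extMul i * extMul j - intMul i * intMul j
        - extMul i * intMul j + intMul i * extMul j := by
        simp only [cliffordMul, diracSymbol, add_mul, mul_sub]
        abel
    _ = _ := by
        rw [this, symmSymbol]
        abel

/-- The projection onto the forms of even degree. -/
def evenPart : Module.End ℂ (GF n) where
  toFun u S := if Even S.card then u S else 0
  map_add' u v := by
    ext S
    simp only [Pi.add_apply]
    split_ifs <;> simp
  map_smul' c u := by
    ext S
    simp

/-- The projection onto the forms of odd degree. -/
def oddPart : Module.End ℂ (GF n) := 1 - evenPart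

theorem evenPart_apply (u : GF n) (S : Finset (Fin n)) :
    evenPart u S = if Even S.card then u S else 0 := rfl

theorem oddPart_apply (u : GF n) (S : Finset (Fin n)) :
    oddPart u S = if Even S.card then 0 else u S := by
  simp only [oddPart, LinearMap.sub_apply, Module.End.one_apply, Pi.sub_apply, evenPart_apply]
  split_ifs <;> simp

theorem evenPart_add_oddPart (u : GF n) : evenPart u + oddPart u = u := by simp [oddPart]

theorem altSign_eq (u : GF n) : altSign u = evenPart u - oddPart u := by
  ext S
  rcases S.card.even_or_odd with h | h
  · simp [altSign, evenPart_apply, oddPart_apply, h]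
  · simp [altSign, evenPart_apply, oddPart_apply, h.neg_one_pow, Nat.not_even_iff_odd.2 h]

theorem altSign_evenPart (u : GF n) : altSign (evenPart u) = evenPart u := by
  ext S
  by_cases h : Even S.card <;> simp [altSign, evenPart_apply, h]

theorem altSign_oddPart (u : GF n) : altSign (oddPart u) = -oddPart u := by
  ext S
  by_cases h : Even S.card
  · simp [altSign, oddPart_apply, h]
  · simp [altSign, oddPart_apply, h, (Nat.not_even_iff_odd.1 h).neg_one_pow]

theorem extMul_mul_evenPart (j : Fin n) : extMul j * evenPart = oddPart * extMul j := by
  refine LinearMap.ext fun u => funext fun S => ?_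
  simp only [Module.End.mul_apply, extMul_apply, evenPart_apply, oddPart_apply]
  by_cases hj : j ∈ S
  · have : S.card = (S.erase j).card + 1 := (card_erase_add_one hj).symm
    by_cases h : Even (S.erase j).card <;> simp only [hj, this, Nat.even_add_one, h, if_true,
      if_false, not_true, not_false_eq_true, mul_zero]
  · simp [hj]

theorem intMul_mul_evenPart (j : Fin n) : intMul j * evenPart = oddPart * intMul j := by
  refine LinearMap.ext fun u => funext fun S => ?_
  simp only [Module.End.mul_apply, intMul_apply, evenPart_apply, oddPart_apply]
  by_cases hj : j ∈ S
  · simp [hj]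
  · by_cases h : Even S.card <;> simp [hj, Nat.even_add_one, h]

theorem map_oddPart_of_map_evenPart {M : Module.End ℂ (GF n)}
    (hM : ∀ u, M (evenPart u) = oddPart (M u)) (u : GF n) : M (oddPart u) = evenPart (M u) := by
  rw [eq_sub_of_add_eq (evenPart_add_oddPart (M u)), ← hM, ← map_sub,
    ← eq_sub_of_add_eq' (evenPart_add_oddPart u)]

theorem intMul_evenPart (j : Fin n) (u : GF n) :
    intMul j (evenPart u) = oddPart (intMul j u) :=
  LinearMap.congr_fun (intMul_mul_evenPart j) u

theorem vee_oneG_evenPart (c : Fin n → ℂ) (u : GF n) :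
    vee (oneG c) (evenPart u) = -∑ j, c j • intMul j (evenPart u) := by
  simp only [vee_oneG, intMul_evenPart, ← map_smul, ← map_sum, altSign_oddPart]

theorem vee_oneG_oddPart (c : Fin n → ℂ) (u : GF n) :
    vee (oneG c) (oddPart u) = ∑ j, c j • intMul j (oddPart u) := by
  simp only [vee_oneG, map_oddPart_of_map_evenPart (intMul_evenPart _), ← map_smul, ← map_sum,
    altSign_evenPart]

theorem ginner_evenPart (u v : GF n) : ginner (evenPart u) v = ginner u (evenPart v) := by
  simp [ginner, evenPart_apply]

theorem ginner_oddPart (u v : GF n) : ginner (oddPart u) v = ginner u (oddPart v) := by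
  simp [ginner, oddPart_apply]

theorem ginner_evenPart_evenPart (u v : GF n) :
    ginner (evenPart u) (evenPart v) = ginner (evenPart u) v := by
  simp only [ginner, evenPart_apply]
  exact sum_congr rfl fun S _ => by split_ifs <;> simp only [zero_mul]

theorem ginner_oddPart_oddPart (u v : GF n) :
    ginner (oddPart u) (oddPart v) = ginner (oddPart u) v := by
  simp only [ginner, oddPart_apply]
  exact sum_congr rfl fun S _ => by split_ifs <;> simp only [zero_mul]

end ExteriorAlgebra

section FirstOrderSystems

variable {u g φ : Form n}

theorem TestForm.map (hφ : TestForm φ) (M : Module.End ℂ (GF n)) :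
    TestForm fun x => M (φ x) :=
  map_mem_formsIn (V := testSubmodule n) M hφ

theorem TestForm.Dcl (hφ : TestForm φ) (j : Fin n) : TestForm (Dcl φ j) := fun S => (hφ S).pd j

theorem TestForm.mem_formsIn (hφ : TestForm φ) : φ ∈ formsIn (ccSubmodule n) :=
  fun S => (hφ S).mem_ccSubmodule

theorem TestForm.sum {ι : Type*} {s : Finset ι} {φ : ι → Form n}
    (hφ : ∀ i ∈ s, TestForm (φ i)) : TestForm fun x => ∑ i ∈ s, φ i x := by
  refine fun S => ?_
  have : (fun x => (∑ i ∈ s, φ i x) S) = ∑ i ∈ s, fun x => φ i x S := by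
    ext x
    simp
  exact this ▸ (testSubmodule n).sum_mem fun i hi => hφ i hi S

theorem TestForm.differentiableAt (hφ : TestForm φ) (x : Pt n) : DifferentiableAt ℝ φ x :=
  differentiableAt_pi.2 fun S => ((hφ S).1.differentiable (by simp)).differentiableAt

theorem Dcl_eq_fderiv {x : Pt n} (hφ : DifferentiableAt ℝ φ x) (j : Fin n) :
    Dcl φ j x = fderiv ℝ φ x (Pi.single j 1) :=
  funext fun S => by
    rw [Dcl, pd, fderiv_apply hφ]
    rfl

theorem Dcl_map (hφ : TestForm φ) (M : Module.End ℂ (GF n)) (j : Fin n) (x : Pt n) :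
    Dcl (fun y => M (φ y)) j x = M (Dcl φ j x) := by
  let L : GF n →L[ℝ] GF n := (M.restrictScalars ℝ).toContinuousLinearMap
  have hL : HasFDerivAt (fun y => M (φ y)) (L.comp (fderiv ℝ φ x)) x :=
    L.hasFDerivAt.comp x (hφ.differentiableAt x).hasFDerivAt
  rw [Dcl_eq_fderiv hL.differentiableAt, hL.fderiv, Dcl_eq_fderiv (hφ.differentiableAt x)]
  rfl

theorem Dcl_sum {ι : Type*} {s : Finset ι} {φ : ι → Form n} (hφ : ∀ i ∈ s, TestForm (φ i))
    (j : Fin n) (x : Pt n) : Dcl (fun y => ∑ i ∈ s, φ i y) j x = ∑ i ∈ s, Dcl (φ i) j x := by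
  rw [Dcl_eq_fderiv ((TestForm.sum hφ).differentiableAt x),
    fderiv_fun_sum fun i hi => (hφ i hi).differentiableAt x, _root_.sum_apply]
  exact sum_congr rfl fun i hi => (Dcl_eq_fderiv ((hφ i hi).differentiableAt x) j).symm

theorem Dcl_comm (hφ : TestForm φ) (i j : Fin n) : Dcl (Dcl φ i) j = Dcl (Dcl φ j) i :=
  funext fun x => funext fun S => pd_comm (hφ S).1 j i x

/-- The Dirac operator `d + δ` on smooth forms. -/
def dirac (φ : Form n) : Form n := fun x => (gd fun j => Dcl φ j x) + gdel fun j => Dcl φ j x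

theorem dirac_apply (φ : Form n) (x : Pt n) :
    dirac φ x = ∑ j, diracSymbol j (Dcl φ j x) := gd_add_gdel _

theorem TestForm.dirac (hφ : TestForm φ) : TestForm (dirac φ) := by
  have := TestForm.sum (s := univ) fun j _ => (hφ.Dcl j).map (diracSymbol j)
  simpa only [← dirac_apply] using this

theorem dirac_dirac (hφ : TestForm φ) (x : Pt n) :
    dirac (dirac φ) x = -∑ j, Dcl (Dcl φ j) j x := by
  have dirac_eq : dirac φ = fun y => ∑ j, diracSymbol j (Dcl φ j y) := funext (dirac_apply φ)
  calc dirac (dirac φ) x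
      = ∑ i, ∑ j, (diracSymbol i * diracSymbol j : Module.End ℂ (GF n)) (Dcl (Dcl φ j) i x) := by
        rw [dirac_apply, dirac_eq]
        simp only [Dcl_sum fun j _ => (hφ.Dcl j).map _, Dcl_map (hφ.Dcl _), map_sum,
          Module.End.mul_apply]
    _ = -∑ j, Dcl (Dcl φ j) j x := by
        rw [sum_sum_mul_apply_of_anticomm (ε := -1)
          (fun i j => by norm_num [diracSymbol_anticomm]) fun i j => by rw [Dcl_comm hφ],
          LinearMap.neg_apply, Module.End.one_apply]

/-- The form `ψ dx^S`. -/
def monomial (S : Finset (Fin n)) (ψ : Pt n → ℂ) : Form n := fun x => Pi.single S (ψ x)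

theorem testForm_monomial (S : Finset (Fin n)) {ψ : Pt n → ℂ} (hψ : IsTest ψ) :
    TestForm (monomial S ψ) := fun T => by
  obtain rfl | h := eq_or_ne T S
  · simpa [monomial] using hψ
  · have : IsTest (0 : Pt n → ℂ) := (testSubmodule n).zero_mem
    simp only [monomial, Pi.single_eq_of_ne h]
    exact this

theorem Dcl_monomial (S : Finset (Fin n)) (ψ : Pt n → ℂ) (j : Fin n) :
    Dcl (monomial S ψ) j = monomial S (pd j ψ) := by
  funext x T
  obtain rfl | h := eq_or_ne T S
  · simp [Dcl, monomial]
  · simp [Dcl, monomial, h, pd]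

theorem ginner_monomial (S : Finset (Fin n)) (ψ : Pt n → ℂ) (v : GF n) (x : Pt n) :
    ginner v (monomial S ψ x) = v S * ψ x := by
  rw [ginner_eq_dotProduct, monomial, dotProduct_single]

theorem exists_hasWeakPD_of_weak_dirac (hu : u ∈ formsIn (l2locSubmodule n))
    (hg : g ∈ formsIn (l2locSubmodule n))
    (h : ∀ φ : Form n, TestForm φ →
      (∫ x, ginner (u x) (dirac φ x)) + ∫ x, ginner (g x) (φ x) = 0)
    (S : Finset (Fin n)) (i : Fin n) :
    ∃ v, HasWeakPD i (fun x => u x S) v ∧ L2loc v := by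
  have hF (j : Fin n) : L2loc fun x => (-diracSymbol j (g x)) S :=
    map_mem_formsIn (-diracSymbol j) hg S
  refine HasWeakLap.exists_hasWeakPD (fun ψ hψ => ?_) (hu S) hF i
  have tested := h _ (testForm_monomial S hψ).dirac
  have first (x : Pt n) : ginner (u x) (dirac (dirac (monomial S ψ)) x) = -(u x S * lap ψ x) := by
    rw [dirac_dirac (testForm_monomial S hψ)]
    simp only [Dcl_monomial, ← sum_neg_distrib, ginner_eq_dotProduct, dotProduct_sum,
      dotProduct_neg]
    simp only [← ginner_eq_dotProduct, ginner_monomial, lap, mul_sum, sum_neg_distrib]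
  have second (x : Pt n) : ginner (g x) (dirac (monomial S ψ) x) =
      ∑ j, (-diracSymbol j (g x)) S * pd j ψ x := by
    simp only [dirac_apply, ginner_eq_dotProduct, dotProduct_sum]
    refine sum_congr rfl fun j _ => ?_
    rw [← ginner_eq_dotProduct, Dcl_monomial, ← neg_neg (ginner _ _), ← ginner_diracSymbol,
      ginner_monomial, Pi.neg_apply, neg_mul]
  simp only [first, second] at tested
  rw [integral_neg, integral_finsetSum _ fun j _ => (hF j).integrable_mul_cc
    (hψ.pd j).mem_ccSubmodule] at tested
  linear_combination -tested

end FirstOrderSystems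

section Mollification

open Filter Topology Convolution ContinuousLinearMap

variable {f g ψ : Pt n → ℂ}

variable (n) in
/-- The standard mollifiers: bump functions with supports shrinking to the origin. -/
def bump (N : ℕ) : ContDiffBump (0 : Pt n) :=
  ⟨1 / ((N : ℝ) + 1) / 2, 1 / ((N : ℝ) + 1), by positivity, half_lt_self (by positivity)⟩

/-- Regularization of a function by convolution with the `N`-th mollifier. -/
def mollify (N : ℕ) (f : Pt n → ℂ) : Pt n → ℂ :=
  (bump n N).normed volume ⋆[lsmul ℝ ℝ, volume] f

theorem isTest_mollify (N : ℕ) (hf : f ∈ ccSubmodule n) : IsTest (mollify N f) :=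
  ⟨(bump n N).hasCompactSupport_normed.contDiff_convolution_left _ (bump n N).contDiff_normed
      hf.1.locallyIntegrable,
    (bump n N).hasCompactSupport_normed.convolution _ hf.2⟩

theorem pd_mem_ccSubmodule (hf : ContDiff ℝ 1 f) (hc : HasCompactSupport f) (j : Fin n) :
    pd j f ∈ ccSubmodule n :=
  ⟨continuous_pd hf j, hc.fderiv_apply ℝ (Pi.single j 1)⟩

theorem pd_mollify (N : ℕ) (hf : ContDiff ℝ 1 f) (hc : HasCompactSupport f) (j : Fin n) :
    pd j (mollify N f) = mollify N (pd j f) := by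
  have hbump : LocallyIntegrable ((bump n N).normed volume) volume :=
    (bump n N).continuous_normed.locallyIntegrable
  funext x
  rw [pd, mollify, (hc.hasFDerivAt_convolution_right (lsmul ℝ ℝ) hbump hf x).fderiv]
  exact convolution_precompR_apply _ hbump (hc.fderiv ℝ) (hf.continuous_fderiv one_ne_zero) x _

theorem norm_mollify_le {M : ℝ} (hf : Continuous f) (hM : ∀ x, ‖f x‖ ≤ M) (N : ℕ) (x : Pt n) :
    ‖mollify N f x‖ ≤ 3 * M := by
  have near : dist (mollify N f x) (f x) ≤ M + M :=
    ContDiffBump.dist_normed_convolution_le hf.aestronglyMeasurable fun y _ =>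
      (dist_le_norm_add_norm _ _).trans (add_le_add (hM y) (hM x))
  rw [dist_eq_norm] at near
  linarith [norm_le_norm_add_norm_sub' (mollify N f x) (f x), hM x]

theorem support_mollify_subset (N : ℕ) (f : Pt n → ℂ) :
    Function.support (mollify N f) ⊆ Metric.cthickening 1 (tsupport f) := by
  refine (support_convolution_subset_swap _).trans ?_
  rw [ContDiffBump.support_normed_eq, add_ball_zero]
  have radius_le_one : (bump n N).rOut ≤ 1 :=
    div_le_one_of_le₀ (by linarith [N.cast_nonneg (α := ℝ)]) (by positivity)
  exact (Metric.thickening_mono radius_le_one _).trans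
    ((Metric.thickening_subset_of_subset 1 subset_closure).trans
      (Metric.thickening_subset_cthickening _ _))

theorem tendsto_integral_mul_mollify (hg : LocallyIntegrable g volume)
    (hψ : ψ ∈ ccSubmodule n) :
    Tendsto (fun N => ∫ x, g x * mollify N ψ x) atTop (𝓝 (∫ x, g x * ψ x)) := by
  obtain ⟨M, hM⟩ := hψ.2.exists_bound_of_continuous hψ.1
  let K := Metric.cthickening 1 (tsupport ψ)
  have hK : MeasurableSet K := Metric.isClosed_cthickening.measurableSet
  have dominating : Integrable (K.indicator fun x => ‖g x‖ * (3 * M)) :=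
    (integrable_indicator_iff hK).2
      ((hg.integrableOn_isCompact hψ.2.cthickening).norm.mul_const _)
  refine tendsto_integral_of_dominated_convergence _
    (fun N => (integrable_mul_cc hg (isTest_mollify N hψ).mem_ccSubmodule).1) dominating
    (fun N => .of_forall fun x => ?_) (.of_forall fun x => ?_)
  · by_cases hx : x ∈ K
    · rw [Set.indicator_of_mem hx, norm_mul]
      exact mul_le_mul_of_nonneg_left (norm_mollify_le hψ.1 hM N x) (norm_nonneg _)
    · rw [Set.indicator_of_notMem hx,
        Function.notMem_support.1 fun h => hx (support_mollify_subset N ψ h), mul_zero, norm_zero]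
  · exact (ContDiffBump.convolution_tendsto_right_of_continuous
      tendsto_one_div_add_atTop_nhds_zero_nat hψ.1 x).const_mul _

end Mollification

section WeakDerivatives

variable {f g h k l ψ φ c : Pt n → ℂ} {i j : Fin n}

theorem HasWeakPD.const_mul (h : HasWeakPD j f g) (z : ℂ) :
    HasWeakPD j (fun x => z * f x) fun x => z * g x := fun φ hφ => by
  simp only [mul_assoc, integral_const_mul, h φ hφ, mul_neg]

theorem HasWeakPD.integral_mul_contDiff (h : HasWeakPD j f g) (hf : LocallyIntegrable f volume)
    (hg : LocallyIntegrable g volume) (hψ : ContDiff ℝ 1 ψ) (hc : HasCompactSupport ψ) :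
    ∫ x, g x * ψ x = -∫ x, f x * pd j ψ x := by
  have hψ_cc : ψ ∈ ccSubmodule n := ⟨hψ.continuous, hc⟩
  refine tendsto_nhds_unique (tendsto_integral_mul_mollify hg hψ_cc) ?_
  simpa only [h _ (isTest_mollify _ hψ_cc), pd_mollify _ hψ hc] using
    (tendsto_integral_mul_mollify hf (pd_mem_ccSubmodule hψ hc j)).neg

theorem HasWeakPD.integral_mul_pd_comm (hi : HasWeakPD i h k) (hj : HasWeakPD j h l)
    (hk : LocallyIntegrable k volume) (hl : LocallyIntegrable l volume) (hψ : ContDiff ℝ 1 ψ)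
    (hc : HasCompactSupport ψ) :
    ∫ x, k x * pd j ψ x = ∫ x, l x * pd i ψ x := by
  have smooth_case (N : ℕ) :
      ∫ x, k x * mollify N (pd j ψ) x = ∫ x, l x * mollify N (pd i ψ) x := by
    have hN := isTest_mollify N ⟨hψ.continuous, hc⟩
    rw [← pd_mollify N hψ hc, ← pd_mollify N hψ hc, hi _ (hN.pd j), hj _ (hN.pd i)]
    simp only [pd_comm hN.1 i j]
  refine tendsto_nhds_unique (tendsto_integral_mul_mollify hk (pd_mem_ccSubmodule hψ hc j)) ?_
  simpa only [smooth_case] using tendsto_integral_mul_mollify hl (pd_mem_ccSubmodule hψ hc i)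

theorem IsTest.contDiff_mul (hφ : IsTest φ) (hc : ContDiff ℝ 1 c) :
    ContDiff ℝ 1 (fun x => c x * φ x) ∧ HasCompactSupport fun x => c x * φ x :=
  ⟨hc.mul (hφ.1.of_le (by simp)), hφ.2.mul_left⟩

theorem HasWeakPD.integral_mul_pd_comm_of_compact_support (hi : HasWeakPD i h k)
    (hj : HasWeakPD j h l) (hk : LocallyIntegrable k volume) (hl : LocallyIntegrable l volume)
    {K : Set (Pt n)} (hK : IsCompact K) (hkK : ∀ x ∉ K, k x = 0) (hlK : ∀ x ∉ K, l x = 0)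
    (hf : ContDiff ℝ 1 f) :
    ∫ x, k x * pd j f x = ∫ x, l x * pd i f x := by
  obtain ⟨N, hN⟩ := exists_subset_ball_nat hK
  obtain ⟨χ, hχ, hχ_one⟩ := exists_isTest_eq_one_on_ball (n := n) ((N : ℝ) + 1)
  have pd_cutoff {x : Pt n} (hx : x ∈ K) (m : Fin n) :
      pd m (fun y => f y * χ y) x = pd m f x := by
    have : (fun y => f y * χ y) =ᶠ[nhds x] f := by
      filter_upwards [Metric.isOpen_ball.mem_nhds (hN hx)] with y hy
      rw [hχ_one y hy, mul_one]
    simp only [pd, this.fderiv_eq]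
  have cutoff {u : Pt n → ℂ} (hu : ∀ x ∉ K, u x = 0) (m : Fin n) (x : Pt n) :
      u x * pd m (fun y => f y * χ y) x = u x * pd m f x := by
    by_cases hx : x ∈ K
    · rw [pd_cutoff hx]
    · simp [hu x hx]
  obtain ⟨hfχ, hfχ_cc⟩ := hχ.contDiff_mul hf
  simpa only [cutoff hkK, cutoff hlK] using hi.integral_mul_pd_comm hj hk hl hfχ hfχ_cc

theorem HasWeakPD.mul_contDiff (h : HasWeakPD j f g) (hf : LocallyIntegrable f volume)
    (hg : LocallyIntegrable g volume) (hc : ContDiff ℝ 1 c) :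
    HasWeakPD j (fun x => c x * f x) fun x => pd j c x * f x + c x * g x := fun φ hφ => by
  obtain ⟨hcφ, hcφ_cc⟩ := hφ.contDiff_mul hc
  have leibniz (x : Pt n) : (pd j c x * f x + c x * g x) * φ x =
      g x * (c x * φ x) + f x * pd j (fun y => c y * φ y) x - c x * f x * pd j φ x := by
    rw [pd_mul (hc.differentiable one_ne_zero x) (hφ.1.differentiable (by simp) x)]
    ring
  have hint_g := integrable_mul_cc hg ⟨hcφ.continuous, hcφ_cc⟩
  have hint_f := integrable_mul_cc hf (pd_mem_ccSubmodule hcφ hcφ_cc j)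
  have hint : Integrable fun x => c x * f x * pd j φ x := by
    simpa only [mul_comm, mul_left_comm] using
      integrable_mul_cc hf (mul_mem_ccSubmodule hc.continuous (hφ.pd j).mem_ccSubmodule)
  simp only [leibniz]
  rw [integral_sub (hint_g.fun_add hint_f) hint, integral_add hint_g hint_f,
    h.integral_mul_contDiff hf hg hcφ hcφ_cc, neg_add_cancel, zero_sub]

variable (n) in
/-- The integrable functions with vanishing integral. -/
def nullSubmodule : Submodule ℂ (Pt n → ℂ) where
  carrier := {f | Integrable f volume ∧ ∫ x, f x = 0}
  zero_mem' := ⟨integrable_zero _ _ _, integral_zero _ _⟩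
  add_mem' hf hg := ⟨hf.1.add hg.1, by rw [integral_add' hf.1 hg.1, hf.2, hg.2, add_zero]⟩
  smul_mem' c f hf := ⟨hf.1.smul c, by simp [integral_const_mul, hf.2]⟩

theorem integral_eq_of_sub_mem_null (hf : Integrable f)
    (h : (fun x => f x - g x) ∈ nullSubmodule n) : ∫ x, f x = ∫ x, g x := by
  have hg : Integrable g := (hf.sub h.1).congr (.of_forall fun x => sub_sub_cancel (f x) (g x))
  exact sub_eq_zero.1 ((integral_sub hf hg).symm.trans h.2)

theorem HasWeakPD.leibniz_mem_null (h : HasWeakPD j f g) (hf : LocallyIntegrable f volume)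
    (hg : LocallyIntegrable g volume) (hφ : IsTest φ) :
    (fun x => g x * φ x + f x * pd j φ x) ∈ nullSubmodule n := by
  have hint_g := integrable_mul_cc hg hφ.mem_ccSubmodule
  have hint_f := integrable_mul_cc hf (hφ.pd j).mem_ccSubmodule
  exact ⟨hint_g.add hint_f, by rw [integral_add hint_g hint_f, h φ hφ, neg_add_cancel]⟩

theorem HasWeakPD.curl_mem_null (hi : HasWeakPD i h k) (hj : HasWeakPD j h l)
    (hk : LocallyIntegrable k volume) (hl : LocallyIntegrable l volume) (hφ : IsTest φ) :
    (fun x => k x * pd j φ x - l x * pd i φ x) ∈ nullSubmodule n := by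
  have hint_k := integrable_mul_cc hk (hφ.pd j).mem_ccSubmodule
  have hint_l := integrable_mul_cc hl (hφ.pd i).mem_ccSubmodule
  refine ⟨hint_k.sub hint_l, ?_⟩
  rw [integral_sub hint_k hint_l,
    hi.integral_mul_pd_comm hj hk hl (hφ.1.of_le (by simp)) hφ.2, sub_self]

theorem HasWeakPD.curl_leibniz_mem_null (hi : HasWeakPD i h k) (hj : HasWeakPD j h l)
    (hh : LocallyIntegrable h volume) (hk : LocallyIntegrable k volume)
    (hl : LocallyIntegrable l volume) (hφ : IsTest φ) (hf : ContDiff ℝ 1 f) :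
    (fun x => (k x * φ x + h x * pd i φ x) * pd j f x
      - (l x * φ x + h x * pd j φ x) * pd i f x) ∈ nullSubmodule n := by
  have product_weakPD {u : Pt n → ℂ} {m : Fin n} (hm : HasWeakPD m h u)
      (hu : LocallyIntegrable u volume) : HasWeakPD m (fun x => φ x * h x)
        fun x => u x * φ x + h x * pd m φ x := by
    simpa only [mul_comm, add_comm] using hm.mul_contDiff hh hu (hφ.1.of_le (by simp))
  have hint_pd {u : Pt n → ℂ} (hu : LocallyIntegrable u volume) (m : Fin n) :
      LocallyIntegrable (fun x => u x * φ x + h x * pd m φ x) volume :=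
    ((integrable_mul_cc hu hφ.mem_ccSubmodule).add
      (integrable_mul_cc hh (hφ.pd m).mem_ccSubmodule)).locallyIntegrable
  have hint {u : Pt n → ℂ} (hu : LocallyIntegrable u volume) (m m' : Fin n) :
      Integrable fun x => (u x * φ x + h x * pd m φ x) * pd m' f x := by
    have hcc {ψ : Pt n → ℂ} (hψ : IsTest ψ) :=
      mul_mem_ccSubmodule (continuous_pd hf m') hψ.mem_ccSubmodule
    refine ((integrable_mul_cc hu (hcc hφ)).add (integrable_mul_cc hh (hcc (hφ.pd m)))).congr
      (.of_forall fun x => ?_)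
    simp only [Pi.add_apply]
    ring
  refine ⟨(hint hk i j).sub (hint hl j i), ?_⟩
  rw [integral_sub (hint hk i j) (hint hl j i), sub_eq_zero]
  refine (product_weakPD hi hk).integral_mul_pd_comm_of_compact_support (product_weakPD hj hl)
    (hint_pd hk i) (hint_pd hl j) hφ.2 (fun x hx => ?_) (fun x hx => ?_) hf <;>
  simp [image_eq_zero_of_notMem_tsupport hx, pd_eq_zero_of_notMem_tsupport _ hx]

end WeakDerivatives

section WeaklyDifferentiableForms

variable {w φ : Form n} {Dw : Fin n → Form n} {f : Pt n → ℂ}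

theorem H1locWith.mem_formsIn (hw : H1locWith w Dw) : w ∈ formsIn (l2locSubmodule n) := hw.1

theorem H1locWith.deriv_mem_formsIn (hw : H1locWith w Dw) (j : Fin n) :
    Dw j ∈ formsIn (l2locSubmodule n) := hw.2.2 j

theorem H1locWith.locallyIntegrable (hw : H1locWith w Dw) (S : Finset (Fin n)) :
    LocallyIntegrable (fun x => w x S) volume := (hw.1 S).locallyIntegrable

theorem H1locWith.locallyIntegrable_deriv (hw : H1locWith w Dw) (j : Fin n)
    (S : Finset (Fin n)) : LocallyIntegrable (fun x => Dw j x S) volume :=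
  (hw.2.2 j S).locallyIntegrable

theorem H1locWith.leibniz_mem_null (hw : H1locWith w Dw) (hφ : TestForm φ) (j : Fin n) :
    (fun x => ginner (Dw j x) (φ x) + ginner (w x) (Dcl φ j x)) ∈ nullSubmodule n := by
  convert (nullSubmodule n).sum_mem (t := univ) fun S _ => (hw.2.1 j S).leibniz_mem_null
    (hw.locallyIntegrable S) (hw.locallyIntegrable_deriv j S) (hφ S) using 1
  ext x
  simp [ginner, sum_add_distrib, Dcl]

theorem H1locWith.curl_mem_null (hw : H1locWith w Dw) (hφ : TestForm φ) (i j : Fin n) :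
    (fun x => ginner (Dw i x) (Dcl φ j x) - ginner (Dw j x) (Dcl φ i x)) ∈ nullSubmodule n := by
  convert (nullSubmodule n).sum_mem (t := univ) fun S _ =>
    (hw.2.1 i S).curl_mem_null (hw.2.1 j S) (hw.locallyIntegrable_deriv i S)
      (hw.locallyIntegrable_deriv j S) (hφ S) using 1
  ext x
  simp [ginner, sum_sub_distrib, Dcl]

theorem H1locWith.curl_leibniz_mem_null (hw : H1locWith w Dw) (hφ : TestForm φ)
    (hf : ContDiff ℝ 1 f) (i j : Fin n) :
    (fun x => pd j f x * (ginner (Dw i x) (φ x) + ginner (w x) (Dcl φ i x))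
      - pd i f x * (ginner (Dw j x) (φ x) + ginner (w x) (Dcl φ j x))) ∈ nullSubmodule n := by
  convert (nullSubmodule n).sum_mem (t := univ) fun S _ =>
    (hw.2.1 i S).curl_leibniz_mem_null (hw.2.1 j S) (hw.locallyIntegrable S)
      (hw.locallyIntegrable_deriv i S) (hw.locallyIntegrable_deriv j S) (hφ S) hf using 1
  ext x
  simp only [ginner, ← sum_add_distrib, mul_sum, ← sum_sub_distrib, Finset.sum_apply, Dcl]
  exact sum_congr rfl fun S _ => by ring

theorem H1locWith.map (hw : H1locWith w Dw) (M : Module.End ℂ (GF n)) :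
    H1locWith (fun x => M (w x)) fun j x => M (Dw j x) := by
  refine ⟨map_mem_formsIn M hw.mem_formsIn, fun j S ψ hψ => ?_,
    fun j => map_mem_formsIn M (hw.deriv_mem_formsIn j)⟩
  obtain ⟨N, hN⟩ := exists_ginner_adjoint M
  have hmono := testForm_monomial S hψ
  have tested := (hw.leibniz_mem_null (hmono.map N) j).2
  simp only [Dcl_map hmono, Dcl_monomial, ← hN, ginner_monomial] at tested
  have hint {u : Form n} (hu : u ∈ formsIn (l2locSubmodule n)) {p : Pt n → ℂ} (hp : IsTest p) :
      Integrable fun x => M (u x) S * p x :=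
    (map_mem_formsIn M hu S).integrable_mul_cc hp.mem_ccSubmodule
  rw [integral_add (hint (hw.deriv_mem_formsIn j) hψ) (hint hw.mem_formsIn (hψ.pd j))] at tested
  exact eq_neg_of_add_eq_zero_left tested

theorem H1locWith.smul (hw : H1locWith w Dw) (hf : ContDiff ℝ 1 f) :
    H1locWith (fun x => f x • w x) fun j x => pd j f x • w x + f x • Dw j x :=
  ⟨smul_mem_formsIn_l2loc hf.continuous hw.mem_formsIn,
    fun j S => (hw.2.1 j S).mul_contDiff (hw.locallyIntegrable S)
      (hw.locallyIntegrable_deriv j S) hf,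
    fun j => (formsIn (l2locSubmodule n)).add_mem
      (smul_mem_formsIn_l2loc (continuous_pd hf j) hw.mem_formsIn)
      (smul_mem_formsIn_l2loc hf.continuous (hw.deriv_mem_formsIn j))⟩

theorem sum_sum_mem_of_add_swap_mem {ι : Type*} [Fintype ι] {V : Submodule ℂ (Pt n → ℂ)}
    {a : ι → ι → Pt n → ℂ} (h : ∀ i j, (fun x => a i j x + a j i x) ∈ V) :
    (fun x => ∑ i, ∑ j, a i j x) ∈ V := by
  convert V.smul_mem (2⁻¹ : ℂ) (V.sum_mem fun i (_ : i ∈ univ) =>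
    V.sum_mem fun j (_ : j ∈ univ) => h i j) using 1
  funext x
  have swapped : ∑ i, ∑ j, a j i x = ∑ i, ∑ j, a i j x := sum_comm
  simp only [Pi.smul_apply, Finset.sum_apply, sum_add_distrib, swapped, smul_eq_mul]
  ring

variable {R : Fin n → Fin n → Module.End ℂ (GF n)}

theorem H1locWith.sum_antisymm_mem_null (hw : H1locWith w Dw) (hφ : TestForm φ)
    (hR : ∀ i j, R j i = -R i j) :
    (fun x => ∑ i, ∑ j, ginner (R i j (Dw i x)) (Dcl φ j x)) ∈ nullSubmodule n := by
  refine sum_sum_mem_of_add_swap_mem fun i j => ?_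
  convert (hw.map (R i j)).curl_mem_null hφ i j using 2 with x
  rw [hR i j, LinearMap.neg_apply, ginner_eq_dotProduct (-_), neg_dotProduct,
    ← ginner_eq_dotProduct, sub_eq_add_neg]

theorem H1locWith.sum_antisymm_leibniz_mem_null (hw : H1locWith w Dw) (hφ : TestForm φ)
    (hR : ∀ i j, R j i = -R i j) (hf : ContDiff ℝ 1 f) :
    (fun x => ∑ i, ∑ j, pd i f x *
      (ginner (R i j (Dw j x)) (φ x) + ginner (R i j (w x)) (Dcl φ j x))) ∈ nullSubmodule n := by
  refine sum_sum_mem_of_add_swap_mem fun i j => ?_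
  convert (hw.map (R i j)).curl_leibniz_mem_null hφ hf j i using 2 with x
  simp only [hR i j, LinearMap.neg_apply, ginner_eq_dotProduct, neg_dotProduct]
  ring

end WeaklyDifferentiableForms

theorem contDiff_half_log {f : Pt n → ℂ} (hf : ContDiff ℝ 1 f)
    (h : ∀ x, f x ∈ Complex.slitPlane) :
    ContDiff ℝ 1 fun x => (1 / 2 : ℂ) * Complex.log (f x) :=
  contDiff_const.mul <| contDiff_iff_contDiffAt.2 fun x =>
    (((Complex.contDiffAt_log (n := 1) (h x)).restrict_scalars ℝ).comp x hf.contDiffAt :)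

theorem exp_half_log_mul_self {z : ℂ} (hz : z ∈ Complex.slitPlane) :
    Complex.exp (1 / 2 * Complex.log z) * Complex.exp (1 / 2 * Complex.log z) = z := by
  rw [← Complex.exp_add, ← add_mul, add_halves, one_mul,
    Complex.exp_log (Complex.slitPlane_ne_zero hz)]

namespace Coeffs

variable (C : Coeffs)

theorem γ_mem_slitPlane (x : Pt 3) : C.γ x ∈ Complex.slitPlane := by
  have re_γ : (C.γ x).re = C.εf x := by
    simp [γ, mul_div_assoc, ← Complex.ofReal_div]
  exact Or.inl (re_γ ▸ C.hε₀.trans_le (C.hεge x))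

theorem μ_mem_slitPlane (x : Pt 3) : (C.μf x : ℂ) ∈ Complex.slitPlane :=
  Complex.ofReal_mem_slitPlane.2 (C.hμ₀.trans_le (C.hμge x))

theorem contDiff_a : ContDiff ℝ 1 C.a := by
  refine contDiff_half_log ?_ C.γ_mem_slitPlane
  exact (Complex.ofRealCLM.contDiff.comp C.hεC1).add
    ((contDiff_const.mul (Complex.ofRealCLM.contDiff.comp C.hσC1)).div_const _)

theorem contDiff_b : ContDiff ℝ 1 C.b :=
  contDiff_half_log (Complex.ofRealCLM.contDiff.comp C.hμC1) C.μ_mem_slitPlane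

theorem sg_mul_sm : (fun y => C.sg y * C.sm y) = fun y => Complex.exp (C.a y + C.b y) :=
  funext fun _ => (Complex.exp_add _ _).symm

theorem contDiff_sg_mul_sm : ContDiff ℝ 1 fun y => C.sg y * C.sm y := by
  rw [sg_mul_sm]
  exact (C.contDiff_a.add C.contDiff_b).cexp

theorem pd_sg_mul_sm (j : Fin 3) (x : Pt 3) :
    pd j (fun y => C.sg y * C.sm y) x = C.sg x * C.sm x * (pd j C.a x + pd j C.b x) := by
  have differentiableAt {f : Pt 3 → ℂ} (hf : ContDiff ℝ 1 f) : DifferentiableAt ℝ f x :=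
    (hf.differentiable one_ne_zero).differentiableAt
  have hab := differentiableAt (C.contDiff_a.add C.contDiff_b)
  rw [← pd_add (differentiableAt C.contDiff_a) (differentiableAt C.contDiff_b), sg_mul_sm,
    pd, hab.hasFDerivAt.cexp.fderiv, sg, sm, ← Complex.exp_add]
  rfl

theorem c0_eq (x : Pt 3) : C.c0 x = Complex.I * C.ω * (C.sg x * C.sm x) := mul_assoc _ _ _

theorem contDiff_c0 : ContDiff ℝ 1 C.c0 :=
  funext C.c0_eq ▸ contDiff_const.mul C.contDiff_sg_mul_sm

theorem pd_c0 (j : Fin 3) (x : Pt 3) :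
    pd j C.c0 x = Complex.I * C.ω * pd j (fun y => C.sg y * C.sm y) x := by
  have := (C.contDiff_sg_mul_sm.differentiable one_ne_zero).differentiableAt (x := x)
  rw [funext C.c0_eq, pd_mul (differentiableAt_const _) this]
  simp [pd]

theorem pd_c0_eq_mul (j : Fin 3) (x : Pt 3) :
    pd j C.c0 x = C.c0 x * (pd j C.a x + pd j C.b x) := by
  rw [pd_c0, pd_sg_mul_sm, c0_eq]
  ring

theorem c0_mul_self (x : Pt 3) : C.c0 x * C.c0 x = -(C.ω ^ 2 * (C.γ x * C.μf x)) := by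
  have hγ : C.sg x * C.sg x = C.γ x := exp_half_log_mul_self (C.γ_mem_slitPlane x)
  have hμ : C.sm x * C.sm x = C.μf x := exp_half_log_mul_self (C.μ_mem_slitPlane x)
  rw [← hγ, ← hμ, c0_eq]
  linear_combination (C.ω : ℂ) ^ 2 * C.sg x ^ 2 * C.sm x ^ 2 * Complex.I_mul_I

end Coeffs

section DiracFactorization

theorem diracSymbol_evenPart (j : Fin n) (u : GF n) :
    diracSymbol j (evenPart u) = oddPart (diracSymbol j u) := by
  have h : diracSymbol j * evenPart = oddPart * diracSymbol j := by
    rw [diracSymbol, sub_mul, mul_sub, extMul_mul_evenPart, intMul_mul_evenPart]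
  exact LinearMap.congr_fun h u

theorem diracSymbol_oddPart (j : Fin n) (u : GF n) :
    diracSymbol j (oddPart u) = evenPart (diracSymbol j u) :=
  map_oddPart_of_map_evenPart (diracSymbol_evenPart j) u

theorem cliffordMulCovector_evenPart (c : Fin n → ℂ) (u : GF n) :
    cliffordMulCovector c (evenPart u) = oddPart (cliffordMulCovector c u) := by
  have h (j : Fin n) : cliffordMul j * evenPart = oddPart * cliffordMul j := by
    rw [cliffordMul, add_mul, mul_add, extMul_mul_evenPart, intMul_mul_evenPart]
  simp only [cliffordMulCovector, LinearMap.sum_apply, LinearMap.smul_apply, map_sum, map_smul]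
  exact sum_congr rfl fun j _ => congrArg _ (LinearMap.congr_fun (h j) u)

theorem cliffordMulCovector_oddPart (c : Fin n → ℂ) (u : GF n) :
    cliffordMulCovector c (oddPart u) = evenPart (cliffordMulCovector c u) :=
  map_oddPart_of_map_evenPart (cliffordMulCovector_evenPart c) u

theorem evenPart_evenPart_add_oddPart (u v : GF n) :
    evenPart (evenPart u + oddPart v) = evenPart u := by
  ext S
  by_cases h : Even S.card <;> simp [evenPart_apply, oddPart_apply, h]

theorem oddPart_evenPart_add_oddPart (u v : GF n) :
    oddPart (evenPart u + oddPart v) = oddPart v := by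
  ext S
  by_cases h : Even S.card <;> simp [evenPart_apply, oddPart_apply, h]

/-- The zeroth order part of `P(γ,μ,ω)` in terms of Clifford multiplication, where `A` and `B` are
the components of `da` and `db`. -/
def zerothOrder (A B : Fin n → ℂ) (c : ℂ) (u : GF n) : GF n :=
  cliffordMulCovector A (oddPart u) + cliffordMulCovector B (evenPart u) + c • u

theorem dirac_add_zerothOrder (A B : Fin n → ℂ) (c : ℂ) (d u : GF n) :
    altSign d + zerothOrder B A c u = evenPart (d + cliffordMulCovector B u + c • u)
      + oddPart (cliffordMulCovector A u + c • u - d) := by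
  have split_u := congrArg (c • ·) (evenPart_add_oddPart u)
  simp only [smul_add] at split_u
  simp only [zerothOrder, altSign_eq, map_add, map_sub, map_smul, ← cliffordMulCovector_evenPart,
    ← cliffordMulCovector_oddPart]
  rw [← split_u]
  abel

/-- In the application `d = (d + δ)u` and `f = (d + δ)φ`: the left side is then the integrand of
`P Pᵗ u` tested against `φ`. -/
theorem ginner_factorization (A B : Fin n → ℂ) (c : ℂ) (d u f φ : GF n) :
    ginner (altSign (altSign d + zerothOrder B A c u)) f
        + ginner (zerothOrder A B c (altSign d + zerothOrder B A c u)) φ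
      = ginner d f
        + (ginner (cliffordMulCovector B (oddPart u)) f
          + ginner (cliffordMulCovector B (evenPart d)) φ)
        - (ginner (cliffordMulCovector A (evenPart u)) f
          + ginner (cliffordMulCovector A (oddPart d)) φ)
        + c * (ginner (altSign u) f + ginner (altSign d) φ
          + ginner (cliffordMulCovector A u + cliffordMulCovector B u) φ)
        + (∑ j, A j * A j) * ginner (evenPart u) φ + (∑ j, B j * B j) * ginner (oddPart u) φ
        + c * c * ginner u φ := by
  rw [dirac_add_zerothOrder, zerothOrder, altSign_eq, altSign_eq, altSign_eq,
    evenPart_evenPart_add_oddPart, oddPart_evenPart_add_oddPart]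
  have split_d := congrArg (· ⬝ᵥ f) (evenPart_add_oddPart d)
  have split_u := congrArg (· ⬝ᵥ φ) (evenPart_add_oddPart u)
  have split_A := congrArg (cliffordMulCovector A · ⬝ᵥ φ) (evenPart_add_oddPart u)
  have split_B := congrArg (cliffordMulCovector B · ⬝ᵥ φ) (evenPart_add_oddPart u)
  simp only [map_add, map_sub, map_smul, ← cliffordMulCovector_evenPart,
    ← cliffordMulCovector_oddPart, cliffordMulCovector_apply_self, ginner_eq_dotProduct,
    add_dotProduct, sub_dotProduct, smul_dotProduct, smul_eq_mul] at *
  linear_combination split_d + c * split_A + c * split_B + c * c * split_u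

end DiracFactorization

section IntegratedIdentities

variable {w φ : Form n} {Dw : Fin n → Form n} {f : Pt n → ℂ}

theorem H1locWith.ginner_dirac_sub_mem_null (hw : H1locWith w Dw) (hφ : TestForm φ) :
    (fun x => ginner (∑ j, diracSymbol j (Dw j x)) (dirac φ x)
      - (ginner (gdel fun j => Dw j x) (gdel fun j => Dcl φ j x)
        + ginner (gd fun j => Dw j x) (gd fun j => Dcl φ j x))) ∈ nullSubmodule n := by
  let R (i j : Fin n) : Module.End ℂ (GF n) := extMul j * extMul i + intMul j * intMul i
  have antisymm (i j : Fin n) : R j i = -R i j := by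
    simp only [R]
    rw [eq_neg_of_add_eq_zero_left (extMul_anticomm i j),
      eq_neg_of_add_eq_zero_left (intMul_anticomm i j), neg_add]
  have cross (i j : Fin n) (u v : GF n) :
      ginner (R i j u) v = extMul i u ⬝ᵥ intMul j v + intMul i u ⬝ᵥ extMul j v := by
    rw [LinearMap.add_apply, ginner_add_left, Module.End.mul_apply, Module.End.mul_apply,
      ginner_extMul, ginner_intMul, ginner_eq_dotProduct, ginner_eq_dotProduct]
  convert (nullSubmodule n).neg_mem (hw.sum_antisymm_mem_null hφ antisymm) using 2 with x
  simp only [Pi.neg_apply, cross, sum_add_distrib, ← gd_add_gdel, dirac, gd_eq_sum, gdel_eq_sum,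
    ginner_eq_dotProduct, add_dotProduct, dotProduct_add, neg_dotProduct, dotProduct_neg,
    ← dotProduct_sum, ← sum_dotProduct]
  ring

theorem ginner_cliffordMulCovector (c : Fin n → ℂ) (u v : GF n) :
    ginner (cliffordMulCovector c u) v = ∑ i, c i * ginner (cliffordMul i u) v := by
  simp only [cliffordMulCovector, LinearMap.sum_apply, LinearMap.smul_apply, ginner_eq_dotProduct,
    sum_dotProduct, smul_dotProduct, smul_eq_mul]

theorem ginner_cliffordMul_diracSymbol (i j : Fin n) (u v : GF n) :
    ginner (cliffordMul i u) (diracSymbol j v) = ginner (cliffordMul i (diracSymbol j u)) v := by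
  have anticomm : diracSymbol j (cliffordMul i u) = -cliffordMul i (diracSymbol j u) :=
    LinearMap.congr_fun (diracSymbol_mul_cliffordMul i j) u
  rw [← neg_eq_iff_eq_neg.2 (ginner_diracSymbol j _ v), anticomm, ginner_eq_dotProduct,
    neg_dotProduct, neg_neg, ginner_eq_dotProduct]

/-- The integrand left over when `∇f · (d + δ)` is integrated by parts: only the part of its symbol
symmetric in the two derivatives survives. -/
def symmSymbolDensity (f : Pt n → ℂ) (w : Form n) (Dw : Fin n → Form n) (φ : Form n)
    (x : Pt n) : ℂ :=
  ∑ i, ∑ j, pd i f x * (ginner (symmSymbol i j (Dw j x)) (φ x)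
    + ginner (symmSymbol i j (w x)) (Dcl φ j x))

theorem H1locWith.ginner_cliffordMulCovector_sub_mem_null (hw : H1locWith w Dw) (hφ : TestForm φ)
    (hf : ContDiff ℝ 1 f) :
    (fun x => (ginner (cliffordMulCovector (fun j => pd j f x) (w x)) (dirac φ x)
        + ginner (cliffordMulCovector (fun j => pd j f x) (∑ j, diracSymbol j (Dw j x))) (φ x))
      - symmSymbolDensity f w Dw φ x) ∈ nullSubmodule n := by
  let R (i j : Fin n) : Module.End ℂ (GF n) := extMul i * extMul j - intMul i * intMul j
  have antisymm (i j : Fin n) : R j i = -R i j := by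
    simp only [R]
    rw [eq_neg_of_add_eq_zero_left (extMul_anticomm j i),
      eq_neg_of_add_eq_zero_left (intMul_anticomm j i)]
    abel
  have split (i j : Fin n) (u v : GF n) : ginner (cliffordMul i (diracSymbol j u)) v =
      ginner (symmSymbol i j u) v + ginner (R i j u) v := by
    rw [← ginner_add_left]
    exact congrArg (ginner · v) (LinearMap.congr_fun (cliffordMul_mul_diracSymbol i j) u)
  have expand (x : Pt n) : ginner (cliffordMulCovector (fun j => pd j f x) (w x)) (dirac φ x)
        + ginner (cliffordMulCovector (fun j => pd j f x) (∑ j, diracSymbol j (Dw j x))) (φ x) =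
      ∑ i, ∑ j, pd i f x * (ginner (cliffordMul i (diracSymbol j (Dw j x))) (φ x)
        + ginner (cliffordMul i (diracSymbol j (w x))) (Dcl φ j x)) := by
    simp only [← ginner_cliffordMul_diracSymbol _ _ (w x), ginner_cliffordMulCovector, dirac_apply,
      mul_add, sum_add_distrib, ← Finset.mul_sum]
    simp only [map_sum, ginner_eq_dotProduct, dotProduct_sum, sum_dotProduct]
    rw [add_comm]
  convert hw.sum_antisymm_leibniz_mem_null hφ antisymm hf using 2 with x
  rw [expand, symmSymbolDensity]
  simp only [split, ← sum_sub_distrib]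
  exact sum_congr rfl fun i _ => sum_congr rfl fun j _ => by ring

theorem diracSymbol_altSign (j : Fin n) (u : GF n) :
    diracSymbol j (altSign u) = -altSign (diracSymbol j u) := by
  rw [altSign_eq, altSign_eq, map_sub, diracSymbol_evenPart, diracSymbol_oddPart, neg_sub]

theorem sum_diracSymbol_altSign (D : Fin n → GF n) :
    ∑ j, diracSymbol j (altSign (D j)) = -altSign (∑ j, diracSymbol j (D j)) := by
  simp only [diracSymbol_altSign, sum_neg_distrib]
  simp only [altSign_eq, map_sum, sum_sub_distrib]

theorem cliffordMul_add_diracSymbol_altSign (j : Fin n) (u : GF n) :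
    cliffordMul j u + diracSymbol j (altSign u) =
      (2 : ℂ) • (extMul j (evenPart u) + intMul j (oddPart u)) := by
  have split_u := congrArg (cliffordMul j) (evenPart_add_oddPart u)
  rw [altSign_eq, ← split_u]
  simp only [cliffordMul, diracSymbol, LinearMap.add_apply, LinearMap.sub_apply, map_add, map_sub]
  module

theorem H1locWith.ginner_altSign_add_mem_null (hw : H1locWith w Dw) (hφ : TestForm φ)
    (hf : ContDiff ℝ 1 f) :
    (fun x => f x * (ginner (altSign (w x)) (dirac φ x)
        + ginner (altSign (∑ j, diracSymbol j (Dw j x))) (φ x))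
      + ginner (cliffordMulCovector (fun j => pd j f x) (w x)) (φ x)
      - 2 * ginner (∑ j, pd j f x • (extMul j (evenPart (w x)) + intMul j (oddPart (w x)))) (φ x))
      ∈ nullSubmodule n := by
  let M (j : Fin n) : Module.End ℂ (GF n) := diracSymbol j * (evenPart - oddPart)
  have M_apply (j : Fin n) (u : GF n) : M j u = diracSymbol j (altSign u) :=
    congrArg (diracSymbol j) (altSign_eq u).symm
  convert (nullSubmodule n).neg_mem ((nullSubmodule n).sum_mem fun j (_ : j ∈ univ) =>
    ((hw.smul hf).map (M j)).leibniz_mem_null hφ j) using 2 with x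
  have zeroth : ginner (cliffordMulCovector (fun j => pd j f x) (w x)) (φ x)
      - 2 * ginner (∑ j, pd j f x • (extMul j (evenPart (w x)) + intMul j (oddPart (w x)))) (φ x)
      = -∑ j, pd j f x * ginner (M j (w x)) (φ x) := by
    have : cliffordMulCovector (fun j => pd j f x) (w x) + ∑ j, pd j f x • M j (w x) = (2 : ℂ) •
        ∑ j, pd j f x • (extMul j (evenPart (w x)) + intMul j (oddPart (w x))) := by
      simp only [cliffordMulCovector, LinearMap.sum_apply, LinearMap.smul_apply, M_apply, smul_sum,
        smul_comm (2 : ℂ), ← sum_add_distrib, ← smul_add, cliffordMul_add_diracSymbol_altSign]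
    have := congrArg (· ⬝ᵥ φ x) this
    simp only [ginner_eq_dotProduct, add_dotProduct, smul_dotProduct, sum_dotProduct,
      smul_eq_mul] at this ⊢
    linear_combination this
  have first : ginner (altSign (w x)) (dirac φ x) = -∑ j, ginner (M j (w x)) (Dcl φ j x) := by
    rw [dirac_apply, ginner_eq_dotProduct, dotProduct_sum, ← sum_neg_distrib]
    exact sum_congr rfl fun j _ => by
      rw [M_apply, ginner_diracSymbol, neg_neg, ginner_eq_dotProduct]
  have second : ginner (altSign (∑ j, diracSymbol j (Dw j x))) (φ x) =
      -∑ j, ginner (M j (Dw j x)) (φ x) := by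
    simp only [M_apply, ginner_eq_dotProduct, ← sum_dotProduct, sum_diracSymbol_altSign,
      neg_dotProduct, neg_neg]
  rw [add_sub_assoc, zeroth, first, second]
  simp only [Pi.neg_apply, Finset.sum_apply, map_add, map_smul, ginner_eq_dotProduct,
    add_dotProduct, smul_dotProduct, sum_add_distrib, smul_eq_mul, ← Finset.mul_sum]
  ring

end IntegratedIdentities

section ThreeDimensions

theorem intMul_proj_zero (j : Fin n) (u : GF n) : intMul j (proj 0 u) = 0 := by
  ext S
  simp [intMul_apply, proj]

theorem extMul_proj_top (j : Fin n) (u : GF n) : extMul j (proj n u) = 0 := by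
  ext S
  by_cases hj : j ∈ S
  · have : (S.erase j).card < n := (card_erase_lt_of_mem hj).trans_le (card_finset_fin_le S)
    simp [extMul_apply, proj, this.ne]
  · simp [extMul_apply, hj]

theorem intMul_proj_one (j : Fin n) (u : GF n) :
    intMul j (proj 1 u) = Pi.single ∅ (u {j}) := by
  ext S
  obtain rfl | hS := eq_or_ne S ∅
  · simp [intMul_apply, proj, msgn]
  · by_cases hj : j ∈ S <;> simp [intMul_apply, proj, hj, hS]

theorem intMul_apply_empty (j : Fin n) (u : GF n) : intMul j u ∅ = u {j} := by
  simp [intMul_apply, msgn]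

theorem extMul_apply_univ (j : Fin 3) (u : GF 3) : extMul j u univ = star2 u j := by
  rw [extMul_apply, if_pos (mem_univ j), msgn]
  fin_cases j
  · change (-1 : ℂ) ^ 0 * u {1, 2} = u {1, 2}
    ring
  · change (-1 : ℂ) ^ 1 * u {0, 2} = -u {0, 2}
    ring
  · change (-1 : ℂ) ^ 2 * u {0, 1} = u {0, 1}
    ring

theorem extMul_proj_two (j : Fin 3) (u : GF 3) :
    extMul j (proj 2 u) = Pi.single univ (star2 u j) := by
  ext S
  obtain rfl | hS := eq_or_ne S univ
  · rw [extMul_apply_univ, Pi.single_eq_same]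
    fin_cases j <;> simp [star2, proj]
  · by_cases hj : j ∈ S
    · have card_S : S.card < 3 := (card_lt_iff_ne_univ S).2 hS
      have : (S.erase j).card < 2 := (card_erase_of_mem hj).trans_lt (by omega)
      rw [extMul_apply, if_pos hj, proj, if_neg this.ne, mul_zero, Pi.single_eq_of_ne hS]
    · simp [extMul_apply, hj, hS]

theorem ginner_extMul_intMul_proj_one (i j : Fin n) (u φ : GF n) :
    ginner (extMul i (intMul j (proj 1 u))) φ = u {j} * φ {i} := by
  rw [ginner_extMul, intMul_proj_one, ginner_eq_dotProduct, single_dotProduct, intMul_apply_empty]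

theorem ginner_intMul_extMul_proj_two (i j : Fin 3) (u φ : GF 3) :
    ginner (intMul i (extMul j (proj 2 u))) φ = star2 u j * star2 φ i := by
  rw [ginner_intMul, extMul_proj_two, ginner_eq_dotProduct, single_dotProduct, extMul_apply_univ]

theorem symmSymbol_apply (i j : Fin n) (u : GF n) :
    symmSymbol i j u =
      (if i = j then u else 0) - (extMul i (intMul j u) + extMul j (intMul i u)) := by
  split_ifs with h <;> simp [symmSymbol, h]

theorem symmSymbol_apply_eq_intMul_extMul (i j : Fin n) (u : GF n) :
    symmSymbol i j u =
      (intMul j (extMul i u) + intMul i (extMul j u)) - if i = j then u else 0 := by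
  have swap (i j : Fin n) :
      intMul i (extMul j u) = (if i = j then u else 0) - extMul j (intMul i u) := by
    have := LinearMap.congr_fun (intMul_mul_extMul i j) u
    split_ifs at this ⊢ <;> simpa using this
  rw [symmSymbol_apply, swap, swap]
  simp only [eq_comm (a := j)]
  abel

theorem evenPart_proj {l : ℕ} (hl : Even l) (u : GF n) : evenPart (proj l u) = proj l u := by
  ext S
  rw [evenPart_apply, proj]
  split_ifs with h₁ h₂ h₃ <;> grind

theorem oddPart_proj {l : ℕ} (hl : Odd l) (u : GF n) : oddPart (proj l u) = proj l u := by
  ext S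
  rw [oddPart_apply, proj]
  split_ifs with h₁ h₂ h₃ <;> grind

variable (i j : Fin 3) (u φ : GF 3)

theorem evenPart_eq_proj : evenPart u = proj 0 u + proj 2 u := by
  ext S
  have : S.card ≤ 3 := card_finset_fin_le S
  simp only [evenPart_apply, Pi.add_apply, proj]
  interval_cases S.card <;> simp [Nat.not_even_iff_odd.2 (by decide : Odd 3)]

theorem oddPart_eq_proj : oddPart u = proj 1 u + proj 3 u := by
  ext S
  have : S.card ≤ 3 := card_finset_fin_le S
  simp only [oddPart_apply, Pi.add_apply, proj]
  interval_cases S.card <;> simp [Nat.not_even_iff_odd.2 (by decide : Odd 3)]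

theorem P0_eq_zerothOrder (A B : Fin 3 → ℂ) (c : ℂ) :
    P0 (oneG A) (oneG B) c u = zerothOrder A B c u := by
  have wedge_odd : wedge (oneG A) (oddPart u) = wedge (oneG A) (proj 1 u) := by
    simp only [oddPart_eq_proj, wedge_oneG, map_add, extMul_proj_top, add_zero]
  have vee_even : vee (oneG B) (evenPart u) = vee (oneG B) (proj 2 u) := by
    simp only [evenPart_eq_proj, vee_oneG, map_add, intMul_proj_zero, zero_add]
  rw [P0, ← wedge_odd, ← vee_even, ← oddPart_eq_proj, ← evenPart_eq_proj, vee_oneG_evenPart,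
    vee_oneG_oddPart, wedge_oneG, wedge_oneG, zerothOrder]
  simp only [cliffordMulCovector, cliffordMul, LinearMap.sum_apply, LinearMap.smul_apply,
    LinearMap.add_apply, smul_add, sum_add_distrib]
  abel

theorem P0t_eq_zerothOrder (A B : Fin 3 → ℂ) (c : ℂ) :
    P0t (oneG A) (oneG B) c u = zerothOrder B A c u := P0_eq_zerothOrder u B A c

theorem ginner_symmSymbol_oddPart :
    ginner (symmSymbol i j (oddPart u)) φ =
      (if i = j then ginner (proj 1 u - proj 3 u) (proj 1 φ + proj 3 φ) else 0)
        - (u {j} * φ {i} + u {i} * φ {j}) := by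
  have on_one : ginner (symmSymbol i j (proj 1 u)) φ =
      (if i = j then ginner (proj 1 u) φ else 0) - (u {j} * φ {i} + u {i} * φ {j}) := by
    rw [symmSymbol_apply, ← ginner_extMul_intMul_proj_one i j,
      ← ginner_extMul_intMul_proj_one j i, ginner_eq_dotProduct, sub_dotProduct, add_dotProduct]
    split_ifs <;> simp [ginner_eq_dotProduct]
  have on_three : symmSymbol i j (proj 3 u) = -if i = j then proj 3 u else 0 := by
    simp only [symmSymbol_apply_eq_intMul_extMul, extMul_proj_top, map_zero, zero_add, zero_sub]
  rw [← oddPart_eq_proj φ, ← ginner_oddPart, map_sub, oddPart_proj odd_one,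
    oddPart_proj (by decide), oddPart_eq_proj, map_add, ginner_add_left, on_one, on_three]
  split_ifs <;> simp only [ginner_eq_dotProduct, neg_dotProduct, sub_dotProduct, zero_dotProduct,
    neg_zero] <;> ring

theorem ginner_symmSymbol_evenPart :
    -ginner (symmSymbol i j (evenPart u)) φ =
      (if i = j then ginner (proj 2 u - proj 0 u) (proj 0 φ + proj 2 φ) else 0)
        - (star2 u j * star2 φ i + star2 u i * star2 φ j) := by
  have on_two : ginner (symmSymbol i j (proj 2 u)) φ =
      (star2 u j * star2 φ i + star2 u i * star2 φ j)
        - if i = j then ginner (proj 2 u) φ else 0 := by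
    rw [symmSymbol_apply_eq_intMul_extMul, ← ginner_intMul_extMul_proj_two i j,
      ← ginner_intMul_extMul_proj_two j i, ginner_eq_dotProduct, sub_dotProduct, add_dotProduct]
    split_ifs <;> simp [ginner_eq_dotProduct, add_comm]
  have on_zero : symmSymbol i j (proj 0 u) = if i = j then proj 0 u else 0 := by
    simp only [symmSymbol_apply, intMul_proj_zero, map_zero, add_zero, sub_zero]
  rw [← evenPart_eq_proj φ, ← ginner_evenPart, map_sub, evenPart_proj even_two,
    evenPart_proj Even.zero, evenPart_eq_proj, map_add, ginner_add_left, on_two, on_zero]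
  split_ifs <;> simp only [ginner_eq_dotProduct, sub_dotProduct, zero_dotProduct] <;> ring

theorem sum_eq_add_dstarPair (c u v t : Fin 3 → ℂ) (du dv : Fin 3 → Fin 3 → ℂ) :
    ∑ i, ∑ j, c i * ((if i = j then t j else 0) - (du j j * v i + du j i * v j)
      - (u j * dv j i + u i * dv j j)) = ∑ j, c j * t j + dstarPair c u v du dv := by
  simp only [dstarPair, ← sum_add_distrib, ← Finset.mul_sum, ← mul_add]
  refine sum_congr rfl fun i _ => congrArg _ ?_
  simp only [sum_sub_distrib, sum_ite_eq, mem_univ, if_true, sum_add_distrib]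
  ring

theorem sum_ginner_symmSymbol_oddPart (c : Fin 3 → ℂ) (D F : Fin 3 → GF 3) :
    ∑ i, ∑ j, c i * (ginner (symmSymbol i j (oddPart (D j))) φ
        + ginner (symmSymbol i j (oddPart u)) (F j)) =
      ∑ j, c j * (ginner (proj 1 (D j) - proj 3 (D j)) (proj 1 φ + proj 3 φ)
        + ginner (proj 1 u - proj 3 u) (proj 1 (F j) + proj 3 (F j)))
      + dstarPair c (fun k => u {k}) (fun k => φ {k}) (fun j k => D j {k}) fun j k => F j {k} := by
  rw [← sum_eq_add_dstarPair]
  refine sum_congr rfl fun i _ => sum_congr rfl fun j _ => ?_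
  rw [ginner_symmSymbol_oddPart, ginner_symmSymbol_oddPart]
  split_ifs <;> ring

theorem neg_sum_ginner_symmSymbol_evenPart (c : Fin 3 → ℂ) (D F : Fin 3 → GF 3) :
    -∑ i, ∑ j, c i * (ginner (symmSymbol i j (evenPart (D j))) φ
        + ginner (symmSymbol i j (evenPart u)) (F j)) =
      ∑ j, c j * (ginner (proj 2 (D j) - proj 0 (D j)) (proj 0 φ + proj 2 φ)
        + ginner (proj 2 u - proj 0 u) (proj 0 (F j) + proj 2 (F j)))
      + dstarPair c (star2 u) (star2 φ) (fun j => star2 (D j)) fun j => star2 (F j) := by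
  rw [← sum_eq_add_dstarPair, ← sum_neg_distrib]
  refine sum_congr rfl fun i _ => ?_
  rw [← sum_neg_distrib]
  refine sum_congr rfl fun j _ => ?_
  rw [← mul_neg, neg_add, ginner_symmSymbol_evenPart, ginner_symmSymbol_evenPart]
  split_ifs <;> ring

end ThreeDimensions

section SecondOrderEquation

variable {V : Submodule ℂ (Pt n → ℂ)} {u w φ : Form n} {D Dw : Fin n → Form n}
  {a b c : Pt n → ℂ}

theorem sum_mem_formsIn (hD : ∀ j, D j ∈ formsIn V) : (fun x => ∑ j, D j x) ∈ formsIn V := by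
  convert (formsIn V).sum_mem fun j (_ : j ∈ univ) => hD j using 1
  ext x
  simp

theorem sum_map_mem_formsIn (M : Fin n → Module.End ℂ (GF n)) (hD : ∀ j, D j ∈ formsIn V) :
    (fun x => ∑ j, M j (D j x)) ∈ formsIn V :=
  sum_mem_formsIn fun j => map_mem_formsIn (M j) (hD j)

theorem gd_mem_formsIn (hD : ∀ j, D j ∈ formsIn V) :
    (fun x => gd fun j => D j x) ∈ formsIn V := by
  simp only [gd_eq_sum]
  exact sum_map_mem_formsIn extMul hD

theorem gdel_mem_formsIn (hD : ∀ j, D j ∈ formsIn V) :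
    (fun x => gdel fun j => D j x) ∈ formsIn V := by
  simp only [gdel_eq_sum]
  exact neg_mem (sum_map_mem_formsIn intMul hD)

theorem continuous_sum_pd_mul_self (ha : ContDiff ℝ 1 a) :
    Continuous fun x => ∑ j, pd j a x * pd j a x :=
  continuous_finsetSum _ fun j _ => (continuous_pd ha j).mul (continuous_pd ha j)

theorem altSign_mem_formsIn (hu : u ∈ formsIn V) : (fun x => altSign (u x)) ∈ formsIn V := by
  simp only [altSign_eq]
  exact map_mem_formsIn (evenPart - oddPart) hu

theorem integrable_ginner (hu : u ∈ formsIn (l2locSubmodule n))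
    (hφ : φ ∈ formsIn (ccSubmodule n)) : Integrable fun x => ginner (u x) (φ x) := by
  simpa using integrable_mul_ginner (continuous_const (y := 1)) hu hφ

theorem cliffordMulCovector_mem_formsIn {A : Fin n → Pt n → ℂ} (hA : ∀ j, Continuous (A j))
    (hu : u ∈ formsIn (l2locSubmodule n)) :
    (fun x => cliffordMulCovector (fun j => A j x) (u x)) ∈ formsIn (l2locSubmodule n) := by
  convert sum_map_mem_formsIn cliffordMul fun j => smul_mem_formsIn_l2loc (hA j) hu using 2 with x
  simp [cliffordMulCovector]

theorem zerothOrder_mem_formsIn {A B : Fin n → Pt n → ℂ} (hA : ∀ j, Continuous (A j))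
    (hB : ∀ j, Continuous (B j)) (hc : Continuous c) (hu : u ∈ formsIn (l2locSubmodule n)) :
    (fun x => zerothOrder (fun j => A j x) (fun j => B j x) (c x) (u x)) ∈
      formsIn (l2locSubmodule n) :=
  add_mem (add_mem (cliffordMulCovector_mem_formsIn hA (map_mem_formsIn oddPart hu))
    (cliffordMulCovector_mem_formsIn hB (map_mem_formsIn evenPart hu)))
    (smul_mem_formsIn_l2loc hc hu)

/-- The form `P(γ,μ,ω)ᵗ w` in terms of the weak derivatives `Dw` of `w`, for arbitrary coefficient
functions `a`, `b`, `c` in place of `½ Log γ`, `½ Log μ`, `iωγ^{1/2}μ^{1/2}`. -/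
def adjointDirac (a b c : Pt n → ℂ) (w : Form n) (Dw : Fin n → Form n) : Form n := fun x =>
  altSign (∑ j, diracSymbol j (Dw j x))
    + zerothOrder (fun j => pd j b x) (fun j => pd j a x) (c x) (w x)

/-- The integrand of the weak second order equation for `w` that expresses
`P(γ,μ,ω) P(γ,μ,ω)ᵗ w = 0`, with `a`, `b`, `c` as in `adjointDirac`. -/
def schrodingerDensity (a b c : Pt n → ℂ) (w : Form n) (Dw : Fin n → Form n) (φ : Form n)
    (x : Pt n) : ℂ :=
  ginner (gdel fun j => Dw j x) (gdel fun j => Dcl φ j x)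
    + ginner (gd fun j => Dw j x) (gd fun j => Dcl φ j x)
    + c x * c x * ginner (w x) (φ x)
    + 2 * ginner (∑ j, pd j c x • (extMul j (evenPart (w x)) + intMul j (oddPart (w x)))) (φ x)
    + ((∑ j, pd j a x * pd j a x) * ginner (evenPart (w x)) (φ x)
      + (∑ j, pd j b x * pd j b x) * ginner (oddPart (w x)) (φ x))
    + (symmSymbolDensity b (fun y => oddPart (w y)) (fun j y => oddPart (Dw j y)) φ x
      - symmSymbolDensity a (fun y => evenPart (w y)) (fun j y => evenPart (Dw j y)) φ x)

theorem integrable_symmSymbolDensity (hw : H1locWith w Dw) (hφ : TestForm φ)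
    (hf : ContDiff ℝ 1 f) : Integrable (symmSymbolDensity f w Dw φ) := by
  unfold symmSymbolDensity
  simp only [mul_add]
  exact integrable_finsetSum _ fun i _ => integrable_finsetSum _ fun j _ =>
    (integrable_mul_ginner (continuous_pd hf i) (map_mem_formsIn _ (hw.deriv_mem_formsIn j))
      hφ.mem_formsIn).add
    (integrable_mul_ginner (continuous_pd hf i) (map_mem_formsIn _ hw.mem_formsIn)
      (hφ.Dcl j).mem_formsIn)

theorem integral_schrodingerDensity (hw : H1locWith w Dw) (hφ : TestForm φ)
    (ha : ContDiff ℝ 1 a) (hb : ContDiff ℝ 1 b) (hc : ContDiff ℝ 1 c) :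
    ∫ x, schrodingerDensity a b c w Dw φ x
      = (∫ x, ginner (gdel fun j => Dw j x) (gdel fun j => Dcl φ j x)
          + ginner (gd fun j => Dw j x) (gd fun j => Dcl φ j x))
        + (∫ x, c x * c x * ginner (w x) (φ x))
        + (∫ x, 2 * ginner (∑ j, pd j c x •
            (extMul j (evenPart (w x)) + intMul j (oddPart (w x)))) (φ x))
        + (∫ x, (∑ j, pd j a x * pd j a x) * ginner (evenPart (w x)) (φ x)
            + (∑ j, pd j b x * pd j b x) * ginner (oddPart (w x)) (φ x))
        + ∫ x, symmSymbolDensity b (fun y => oddPart (w y)) (fun j y => oddPart (Dw j y)) φ x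
            - symmSymbolDensity a (fun y => evenPart (w y)) (fun j y => evenPart (Dw j y)) φ x := by
  have hmap {c : Pt n → ℂ} (hc : Continuous c) (M : Module.End ℂ (GF n)) :
      Integrable fun x => c x * ginner (M (w x)) (φ x) :=
    integrable_mul_ginner hc (map_mem_formsIn M hw.mem_formsIn) hφ.mem_formsIn
  have hD := fun j => (hφ.Dcl j).mem_formsIn
  have henergy := (integrable_ginner (gdel_mem_formsIn hw.deriv_mem_formsIn)
    (gdel_mem_formsIn hD)).add
    (integrable_ginner (gd_mem_formsIn hw.deriv_mem_formsIn) (gd_mem_formsIn hD))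
  have hmass := hmap (hc.continuous.mul hc.continuous) 1
  have hgrad := (integrable_ginner (sum_mem_formsIn fun j => smul_mem_formsIn_l2loc
    (continuous_pd hc j) (map_mem_formsIn (extMul j * evenPart + intMul j * oddPart)
      hw.mem_formsIn)) hφ.mem_formsIn).const_mul 2
  have hquad := (hmap (continuous_sum_pd_mul_self ha) evenPart).add
    (hmap (continuous_sum_pd_mul_self hb) oddPart)
  have hsymm := (integrable_symmSymbolDensity (hw.map oddPart) hφ hb).sub
    (integrable_symmSymbolDensity (hw.map evenPart) hφ ha)
  refine (integral_add (((henergy.add hmass).add hgrad).add hquad) hsymm).trans ?_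
  rw [integral_add' ((henergy.add hmass).add hgrad) hquad, integral_add' (henergy.add hmass) hgrad,
    integral_add' henergy hmass]
  rfl

theorem adjointDirac_mem_formsIn (hw : H1locWith w Dw) (ha : ContDiff ℝ 1 a)
    (hb : ContDiff ℝ 1 b) (hc : Continuous c) :
    adjointDirac a b c w Dw ∈ formsIn (l2locSubmodule n) :=
  add_mem (altSign_mem_formsIn (sum_map_mem_formsIn _ hw.deriv_mem_formsIn))
    (zerothOrder_mem_formsIn (continuous_pd hb) (continuous_pd ha) hc hw.mem_formsIn)

theorem H1locWith.adjointDirac_sub_schrodingerDensity_mem_null (hw : H1locWith w Dw)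
    (hφ : TestForm φ) (ha : ContDiff ℝ 1 a) (hb : ContDiff ℝ 1 b) (hc : ContDiff ℝ 1 c)
    (grad_c : ∀ j x, pd j c x = c x * (pd j a x + pd j b x)) :
    (fun x => ginner (altSign (adjointDirac a b c w Dw x)) (dirac φ x)
      + ginner (zerothOrder (fun j => pd j a x) (fun j => pd j b x) (c x)
          (adjointDirac a b c w Dw x)) (φ x)
      - schrodingerDensity a b c w Dw φ x) ∈ nullSubmodule n := by
  convert (add_mem (add_mem (hw.ginner_dirac_sub_mem_null hφ)
    (sub_mem ((hw.map oddPart).ginner_cliffordMulCovector_sub_mem_null hφ hb)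
      ((hw.map evenPart).ginner_cliffordMulCovector_sub_mem_null hφ ha)))
    (hw.ginner_altSign_add_mem_null hφ hc)) using 2 with x
  have clifford_c : ginner (cliffordMulCovector (fun j => pd j c x) (w x)) (φ x) =
      c x * ginner (cliffordMulCovector (fun j => pd j a x) (w x)
        + cliffordMulCovector (fun j => pd j b x) (w x)) (φ x) := by
    simp only [grad_c, ginner_add_left, ginner_cliffordMulCovector, ← sum_add_distrib,
      Finset.mul_sum]
    exact sum_congr rfl fun j _ => by ring
  simp only [Pi.add_apply, Pi.sub_apply, diracSymbol_oddPart, diracSymbol_evenPart, ← map_sum,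
    adjointDirac, schrodingerDensity, ginner_factorization, clifford_c]
  ring

theorem H1locWith.integral_adjointDirac_eq (hw : H1locWith w Dw)
    (hφ : TestForm φ) (ha : ContDiff ℝ 1 a) (hb : ContDiff ℝ 1 b) (hc : ContDiff ℝ 1 c)
    (grad_c : ∀ j x, pd j c x = c x * (pd j a x + pd j b x)) :
    (∫ x, ginner (altSign (adjointDirac a b c w Dw x)) (dirac φ x))
      + (∫ x, ginner (zerothOrder (fun j => pd j a x) (fun j => pd j b x) (c x)
          (adjointDirac a b c w Dw x)) (φ x))
      = ∫ x, schrodingerDensity a b c w Dw φ x := by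
  have hv := adjointDirac_mem_formsIn hw ha hb hc.continuous
  have first := integrable_ginner (altSign_mem_formsIn hv) hφ.dirac.mem_formsIn
  have second := integrable_ginner (zerothOrder_mem_formsIn (continuous_pd ha) (continuous_pd hb)
    hc.continuous hv) hφ.mem_formsIn
  rw [← integral_add first second]
  exact integral_eq_of_sub_mem_null (first.add second)
    (hw.adjointDirac_sub_schrodingerDensity_mem_null hφ ha hb hc grad_c)

end SecondOrderEquation

section Reduction

variable {V : Submodule ℂ (Pt 3 → ℂ)} {u w φ : Form 3} {Dw : Fin 3 → Form 3}
  {a b : Pt 3 → ℂ}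

theorem star2_mem (hu : u ∈ formsIn V) (k : Fin 3) : (fun x => star2 (u x) k) ∈ V := by
  fin_cases k
  · exact hu {1, 2}
  · exact V.neg_mem (hu {0, 2})
  · exact hu {0, 1}

theorem integrable_dstarPair {c u v : Fin 3 → Pt 3 → ℂ} {du dv : Fin 3 → Fin 3 → Pt 3 → ℂ}
    (hc : ∀ k, Continuous (c k)) (hu : ∀ j, L2loc (u j)) (hdu : ∀ j k, L2loc (du j k))
    (hv : ∀ j, v j ∈ ccSubmodule 3) (hdv : ∀ j k, dv j k ∈ ccSubmodule 3) :
    Integrable fun x => dstarPair (fun k => c k x) (fun k => u k x) (fun k => v k x)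
      (fun j k => du j k x) fun j k => dv j k x := by
  have hprod {f g : Pt 3 → ℂ} (k : Fin 3) (hf : L2loc f) (hg : g ∈ ccSubmodule 3) :
      Integrable fun x => c k x * (f x * g x) := by
    simpa only [mul_assoc] using (hf.continuous_mul (hc k)).integrable_mul_cc hg
  simp only [dstarPair, ← sum_neg_distrib, neg_add, mul_add, mul_neg, Finset.mul_sum]
  exact integrable_finsetSum _ fun k _ => integrable_finsetSum _ fun j _ =>
    (((hprod k (hdu j j) (hv k)).neg.add (hprod k (hu j) (hdv j k)).neg).add
      (hprod k (hdu j k) (hv j)).neg).add (hprod k (hu k) (hdv j j)).neg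

variable (C : Coeffs)

theorem Coeffs.Ptfull_eq_adjointDirac :
    (fun x => Ptfull (C.da x) (C.db x) (C.c0 x) (fun j => Dw j x) (w x)) =
      adjointDirac C.a C.b C.c0 w Dw := by
  funext x
  rw [Ptfull, gd_add_gdel, sum_diracSymbol_altSign, neg_neg, da, db, P0t_eq_zerothOrder,
    adjointDirac]

theorem Coeffs.omega_sq_mul_contrast_eq (x : Pt 3) :
    C.ω ^ 2 * (C.γ x * C.μf x - ((C.ε₀ * C.μ₀ : ℝ) : ℂ)) =
      -(C.c0 x * C.c0 x + C.ω ^ 2 * ((C.ε₀ * C.μ₀ : ℝ) : ℂ)) := by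
  rw [C.c0_mul_self]
  ring

theorem Coeffs.ginner_dsgm_eq (x : Pt 3) (u v : GF 3) :
    ginner ((2 * Complex.I * C.ω : ℂ) • (vee (C.dsgm x) (proj 1 u + proj 3 u)
        + wedge (C.dsgm x) (proj 0 u + proj 2 u))) v =
      2 * ginner (∑ j, pd j C.c0 x • (extMul j (evenPart u) + intMul j (oddPart u))) v := by
  rw [← evenPart_eq_proj, ← oddPart_eq_proj, dsgm, vee_oneG_oddPart, wedge_oneG, add_comm,
    ← sum_add_distrib, mul_assoc, mul_smul, smul_sum]
  simp only [C.pd_c0, mul_smul, smul_add]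
  exact smul_dotProduct _ _ _

theorem Coeffs.ginner_da_add_ginner_db_eq (x : Pt 3) (u v : GF 3) :
    ginner (C.da x) (C.da x) * ginner (proj 0 u + proj 2 u) (proj 0 v + proj 2 v)
        + ginner (C.db x) (C.db x) * ginner (proj 1 u + proj 3 u) (proj 1 v + proj 3 v) =
      (∑ j, pd j C.a x * pd j C.a x) * ginner (evenPart u) v
        + (∑ j, pd j C.b x * pd j C.b x) * ginner (oddPart u) v := by
  rw [da, db, ginner_oneG_self, ginner_oneG_self, ← evenPart_eq_proj, ← evenPart_eq_proj,
    ← oddPart_eq_proj, ← oddPart_eq_proj, ginner_evenPart_evenPart, ginner_oddPart_oddPart]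

theorem integral_symmSymbolDensity_eq (hw : H1locWith w Dw) (hφ : TestForm φ)
    (ha : ContDiff ℝ 1 a) (hb : ContDiff ℝ 1 b) :
    (∫ x, (∑ j, pd j a x *
        (ginner (proj 2 (Dw j x) - proj 0 (Dw j x)) (proj 0 (φ x) + proj 2 (φ x))
          + ginner (proj 2 (w x) - proj 0 (w x)) (proj 0 (Dcl φ j x) + proj 2 (Dcl φ j x))))
      + ∑ j, pd j b x *
        (ginner (proj 1 (Dw j x) - proj 3 (Dw j x)) (proj 1 (φ x) + proj 3 (φ x))
          + ginner (proj 1 (w x) - proj 3 (w x)) (proj 1 (Dcl φ j x) + proj 3 (Dcl φ j x))))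
    + (∫ x, dstarPair (fun k => pd k b x) (fun j => w x {j}) (fun j => φ x {j})
        (fun j k => Dw j x {k}) (fun j k => Dcl φ j x {k}))
    + (∫ x, dstarPair (fun k => pd k a x) (star2 (w x)) (star2 (φ x))
        (fun j k => star2 (Dw j x) k) (fun j k => star2 (Dcl φ j x) k))
    = ∫ x, symmSymbolDensity b (fun y => oddPart (w y)) (fun j y => oddPart (Dw j y)) φ x
        - symmSymbolDensity a (fun y => evenPart (w y)) (fun j y => evenPart (Dw j y)) φ x := by
  have hdensity :=
    (integrable_symmSymbolDensity (hw.map oddPart) hφ hb).sub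
      (integrable_symmSymbolDensity (hw.map evenPart) hφ ha)
  have hone := integrable_dstarPair (continuous_pd hb) (fun j => hw.1 {j})
    (fun j k => hw.2.2 j {k}) (fun j => hφ.mem_formsIn {j}) fun j k => (hφ.Dcl j).mem_formsIn {k}
  have htwo := integrable_dstarPair (continuous_pd ha) (star2_mem hw.mem_formsIn)
    (fun j => star2_mem (hw.deriv_mem_formsIn j)) (star2_mem hφ.mem_formsIn)
    fun j => star2_mem (hφ.Dcl j).mem_formsIn
  rw [← eq_sub_iff_add_eq, ← eq_sub_iff_add_eq]
  refine Eq.trans ?_ ((integral_sub (hdensity.sub htwo) hone).trans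
    (congrArg (· - _) (integral_sub hdensity htwo)))
  refine integral_congr_ae (.of_forall fun x => ?_)
  have odd_part := sum_ginner_symmSymbol_oddPart (w x) (φ x) (fun j => pd j b x)
    (fun j => Dw j x) fun j => Dcl φ j x
  have even_part := neg_sum_ginner_symmSymbol_evenPart (w x) (φ x) (fun j => pd j a x)
    (fun j => Dw j x) fun j => Dcl φ j x
  simp only [Pi.sub_apply, symmSymbolDensity]
  linear_combination -odd_part - even_part

theorem Coeffs.integral_add_Qpair_eq (hw : H1locWith w Dw) (hφ : TestForm φ) :
    (∫ x, ginner (gdel fun j => Dw j x) (gdel fun j => Dcl φ j x)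
        + ginner (gd fun j => Dw j x) (gd fun j => Dcl φ j x)
        - (C.ω : ℂ) ^ 2 * ((C.ε₀ * C.μ₀ : ℝ) : ℂ) * ginner (w x) (φ x)) + Qpair C w Dw φ
      = ∫ x, schrodingerDensity C.a C.b C.c0 w Dw φ x := by
  have hD := fun j => (hφ.Dcl j).mem_formsIn
  have hshift : Integrable fun x => C.ω ^ 2 * ((C.ε₀ * C.μ₀ : ℝ) : ℂ) * ginner (w x) (φ x) :=
    (integrable_ginner hw.mem_formsIn hφ.mem_formsIn).const_mul _
  have hmass : Integrable fun x => C.c0 x * C.c0 x * ginner (w x) (φ x) :=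
    integrable_mul_ginner (C.contDiff_c0.continuous.mul C.contDiff_c0.continuous)
      hw.mem_formsIn hφ.mem_formsIn
  have potential : ∫ x, C.ω ^ 2 * (C.γ x * C.μf x - ((C.ε₀ * C.μ₀ : ℝ) : ℂ)) * ginner (w x) (φ x) =
      -((∫ x, C.c0 x * C.c0 x * ginner (w x) (φ x))
        + ∫ x, C.ω ^ 2 * ((C.ε₀ * C.μ₀ : ℝ) : ℂ) * ginner (w x) (φ x)) := by
    simp only [C.omega_sq_mul_contrast_eq, neg_mul, add_mul, integral_neg,
      integral_add hmass hshift]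
  have energy := integral_sub ((integrable_ginner (gdel_mem_formsIn hw.deriv_mem_formsIn)
    (gdel_mem_formsIn hD)).add (integrable_ginner (gd_mem_formsIn hw.deriv_mem_formsIn)
      (gd_mem_formsIn hD))) hshift
  simp only [Pi.add_apply] at energy
  rw [Qpair, energy, potential, integral_schrodingerDensity hw hφ C.contDiff_a C.contDiff_b
    C.contDiff_c0, ← integral_symmSymbolDensity_eq hw hφ C.contDiff_a C.contDiff_b]
  simp only [C.ginner_dsgm_eq, C.ginner_da_add_ginner_db_eq]
  ring

theorem Coeffs.isWeakSolP_adjointDirac (hw : H1locWith w Dw)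
    (heq : ∀ φ : Form 3, TestForm φ →
      (∫ x, ginner (gdel fun j => Dw j x) (gdel fun j => Dcl φ j x)
          + ginner (gd fun j => Dw j x) (gd fun j => Dcl φ j x)
          - (C.ω : ℂ) ^ 2 * ((C.ε₀ * C.μ₀ : ℝ) : ℂ) * ginner (w x) (φ x))
        + Qpair C w Dw φ = 0) :
    IsWeakSolP C (adjointDirac C.a C.b C.c0 w Dw) := fun φ hφ => by
  rw [← heq φ hφ, C.integral_add_Qpair_eq hw hφ,
    ← hw.integral_adjointDirac_eq hφ C.contDiff_a C.contDiff_b C.contDiff_c0 C.pd_c0_eq_mul]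
  simp only [da, db, P0_eq_zerothOrder]
  rfl

theorem IsWeakSolP.exists_hasWeakPD {C : Coeffs} {v : Form 3} (hv : IsWeakSolP C v)
    (hv_mem : v ∈ formsIn (l2locSubmodule 3)) (S : Finset (Fin 3)) (j : Fin 3) :
    ∃ h, HasWeakPD j (fun x => v x S) h ∧ L2loc h := by
  have zeroth_mem :
      (fun x => P0 (C.da x) (C.db x) (C.c0 x) (v x)) ∈ formsIn (l2locSubmodule 3) := by
    simp only [Coeffs.da, Coeffs.db, P0_eq_zerothOrder]
    exact zerothOrder_mem_formsIn (continuous_pd C.contDiff_a) (continuous_pd C.contDiff_b)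
      C.contDiff_c0.continuous hv_mem
  obtain ⟨h, hh, h_mem⟩ :=
    exists_hasWeakPD_of_weak_dirac (altSign_mem_formsIn hv_mem) zeroth_mem hv S j
  have altSign_altSign (x : Pt 3) : (-1 : ℂ) ^ S.card * altSign (v x) S = v x S := by
    rw [altSign, ← mul_assoc, ← mul_pow, neg_mul_neg, one_mul, one_pow, one_mul]
  refine ⟨fun x => (-1 : ℂ) ^ S.card * h x, ?_, (l2locSubmodule 3).smul_mem _ h_mem⟩
  simpa only [altSign_altSign] using hh.const_mul ((-1 : ℂ) ^ S.card)

end Reduction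

/-- Proposition 2.1.  If the graded form `w`, with components in
`H¹_loc(ℝ³)`, satisfies
`∫ [⟨δw,δφ⟩ + ⟨dw,dφ⟩ − ω²ε₀μ₀⟨w,φ⟩] dx + ⟨Q(γ,μ,ω)w, φ⟩ = 0`
for every smooth compactly supported graded form `φ`, then `v := P(γ,μ,ω)^t w` is a weak
solution of `P(γ,μ,ω)v = 0` on `ℝ³` and every component of `v` belongs to `H¹_loc`. -/
theorem statement0 (C : Coeffs) (w : Form 3) (Dw : Fin 3 → Form 3)
    (hw : H1locWith w Dw)
    (heq : ∀ φ : Form 3, TestForm φ →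
      (∫ x, ginner (gdel fun j => Dw j x) (gdel fun j => Dcl φ j x)
          + ginner (gd fun j => Dw j x) (gd fun j => Dcl φ j x)
          - (C.ω : ℂ) ^ 2 * ((C.ε₀ * C.μ₀ : ℝ) : ℂ) * ginner (w x) (φ x))
        + Qpair C w Dw φ = 0) :
    IsWeakSolP C
      (fun x => Ptfull (C.da x) (C.db x) (C.c0 x) (fun j => Dw j x) (w x)) ∧
    ∀ S : Finset (Fin 3),
      L2loc (fun x => Ptfull (C.da x) (C.db x) (C.c0 x) (fun j => Dw j x) (w x) S) ∧
      ∀ j : Fin 3, ∃ h : Pt 3 → ℂ,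
        HasWeakPD j
          (fun x => Ptfull (C.da x) (C.db x) (C.c0 x) (fun j' => Dw j' x) (w x) S) h ∧
        L2loc h := by
  have hv := adjointDirac_mem_formsIn hw C.contDiff_a C.contDiff_b C.contDiff_c0.continuous
  have weak_sol := C.isWeakSolP_adjointDirac hw heq
  rw [← C.Ptfull_eq_adjointDirac] at hv weak_sol
  exact ⟨weak_sol, fun S => ⟨hv S, weak_sol.exists_hasWeakPD hv S⟩⟩

end EMPaper
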